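/- Suppose there exist θ^L < θ^H in (0,1) such that, wherever u'' exists, u''(θ) < 0 for θ ∈ [0,θ^L), u''(θ) > 0 for θ ∈ (θ^L,θ^H), and u''(θ) < 0 for θ ∈ (θ^H,1]. Suppose there is no pair θ_*^L < θ_*^H in (θ^L,θ^H) satisfying the two tangency conditions u(m^L) + u'(m^L)·(θ_*^L − m^L) = u(θ_*^L) and u(m^H) + u'(m^H)·(θ_*^H − m^H) = u(θ_*^H) with m^L = E_F[θ|(0,θ_*^L)], m^H = E_F[θ|(θ_*^H,1)]. If there exists θ_*^M ∈ (0,1) such that u(m^L) + u'(m^L)·(θ_*^M − m^L) = u(m^H) + u'(m^H)·(θ_*^M − m^H) and u(m^L)·F(θ_*^M) + u(m^H)·(1 − F(θ_*^M)) ≥ u(E_F[θ]), where m^L = E_F[θ|(0,θ_*^M)] and m^H = E_F[θ|(θ_*^M,1)], then there exists such a θ_*^M for which the open pooling set P_* = [0,θ_*^M) ∪ (θ_*^M,1] is optimal for u; moreover for this θ_*^M one has m^L ∈ (0,θ^L) and m^H ∈ (θ^H,1). -/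

import Mathlib

open MeasureTheory Set
open scoped Classical

noncomputable section

/-- CDF associated with the density `f` (relevant on `[0,1]`): `F(x) = ∫_0^x f`. -/
def cdfF (f : ℝ → ℝ) (x : ℝ) : ℝ := ∫ t in (0:ℝ)..x, f t

/-- Conditional mean `E_F[θ | (ξ,ζ)]` of `θ` on the interval `(ξ, ζ)` under density `f`. -/
def condMean (f : ℝ → ℝ) (ξ ζ : ℝ) : ℝ :=
  (∫ t in ξ..ζ, t * f t) / (∫ t in ξ..ζ, f t)

/-- `f` is a strictly positive density of a probability measure on `[0,1]`. -/
def IsDensity (f : ℝ → ℝ) : Prop :=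
  (∀ θ ∈ Icc (0:ℝ) 1, 0 < f θ) ∧ IntegrableOn f (Icc (0:ℝ) 1) ∧
    (∫ t in (0:ℝ)..1, f t) = 1

/-- An open pooling set: a relatively open subset of `[0,1]`. -/
def IsPoolingSet (P : Set ℝ) : Prop :=
  ∃ U : Set ℝ, IsOpen U ∧ P = U ∩ Icc (0:ℝ) 1

/-- Left endpoint `ξ_i` of the interval component of `θ` in `P`. -/
def compInf (P : Set ℝ) (θ : ℝ) : ℝ := sInf (connectedComponentIn P θ)

/-- Right endpoint `ζ_i` of the interval component of `θ` in `P`. -/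
def compSup (P : Set ℝ) (θ : ℝ) : ℝ := sSup (connectedComponentIn P θ)

/-- The posterior-mean map induced by the pooling set `P`: states in a pooled
interval are mapped to the conditional mean of that interval, other states to
themselves. -/
def poolMean (f : ℝ → ℝ) (P : Set ℝ) (θ : ℝ) : ℝ :=
  if θ ∈ P then condMean f (compInf P θ) (compSup P θ) else θ

/-- The induced distribution `G_P` of posterior means. -/
def Gp (f : ℝ → ℝ) (P : Set ℝ) (θ : ℝ) : ℝ :=
  if θ ∈ P then
    (if θ < condMean f (compInf P θ) (compSup P θ) then cdfF f (compInf P θ)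
     else cdfF f (compSup P θ))
  else cdfF f θ

/-- `Γ_P(θ) = ∫_0^θ G_P(t) dt`. -/
def Gam (f : ℝ → ℝ) (P : Set ℝ) (θ : ℝ) : ℝ := ∫ t in (0:ℝ)..θ, Gp f P t

/-- The value `∫_0^1 u(θ) dG_P(θ)` of the pooling set `P` under payoff `u`,
written as the expectation of `u` composed with the posterior-mean map. -/
def poolValue (f : ℝ → ℝ) (u : ℝ → ℝ) (P : Set ℝ) : ℝ :=
  ∫ θ in (0:ℝ)..1, u (poolMean f P θ) * f θ

/-- `P` is an optimal pooling set for `u`. -/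
def IsOptimal (f : ℝ → ℝ) (u : ℝ → ℝ) (P : Set ℝ) : Prop :=
  IsPoolingSet P ∧ ∀ Q : Set ℝ, IsPoolingSet Q → poolValue f u Q ≤ poolValue f u P

/-- `u` is continuously differentiable on `[0,1]` with derivative `u'`, and `u'`
is absolutely continuous with integrable a.e. derivative `u''` (encoded via the
fundamental theorem of calculus). -/
def C1AC (u u' u'' : ℝ → ℝ) : Prop :=
  (∀ θ ∈ Icc (0:ℝ) 1, HasDerivAt u (u' θ) θ) ∧
  ContinuousOn u' (Icc (0:ℝ) 1) ∧
  IntegrableOn u'' (Icc (0:ℝ) 1) ∧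
  (∀ θ ∈ Icc (0:ℝ) 1, u' θ = u' 0 + ∫ t in (0:ℝ)..θ, u'' t)

/-!
Write `P a b` for the payoff from pooling the states of `(a, b)` and `D a b` for the payoff from
disclosing them. The cutoff is a maximizer `z` of `t ↦ P 0 t + P t 1`: its first-order condition is
that the tangent lines of `u` at the two conditional means meet at `z`.

To compare `z` with an arbitrary pooling set `Q`, take points outside `Q` that surround the
inflection points `θL` and `θH`. By Jensen's inequality the payoff of `Q` does not decrease if the
states outside these points are pooled at either end and those in the convex middle are disclosed.
An interval straddling `θL` is then cut off from the lower pool as profitably as possible: the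
first-order condition shows that a cut below `θL` is worse than no cut, so the optimal cut lies in
the convex region and the states above it can be disclosed. Reflection `t ↦ 1 - t` gives the same
at `θH`. What remains is `P 0 a + D a b + P b 1` with `θL ≤ a ≤ b ≤ θH`. Maximizing in `a` and then
in `b` produces a tangent pair unless `a = b`, where the payoff is at most that of `z`.

The conditional means of `z` lie beyond the inflection points, since otherwise merging the two pools
or disclosing some states next to `z` would be an improvement that the above excludes.
-/

open Filter Topology

section TangentLine

variable {u u' : ℝ → ℝ} {s : Set ℝ} {x y : ℝ}

/-- The tangent line to `u` at `m`, evaluated at `x`, where `u'` is the derivative of `u`. -/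
def tangentLine (u u' : ℝ → ℝ) (m x : ℝ) : ℝ := u m + u' m * (x - m)

theorem lt_tangentLine_of_strictConcaveOn (hu : StrictConcaveOn ℝ s u)
    (hd : HasDerivAt u (u' x) x) (hx : x ∈ s) (hy : y ∈ s) (hxy : x ≠ y) :
    u y < tangentLine u u' x y := by
  unfold tangentLine
  rcases hxy.lt_or_gt with h | h
  · have := hu.slope_lt_of_hasDerivAt hx hy h hd
    rw [slope_def_field, div_lt_iff₀ (by linarith)] at this
    linarith
  · have := hu.lt_slope_of_hasDerivAt hy hx h hd
    rw [slope_def_field, lt_div_iff₀ (by linarith)] at this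
    linarith

theorem tangentLine_lt_of_strictConvexOn (hu : StrictConvexOn ℝ s u)
    (hd : HasDerivAt u (u' x) x) (hx : x ∈ s) (hy : y ∈ s) (hxy : x ≠ y) :
    tangentLine u u' x y < u y := by
  have := lt_tangentLine_of_strictConcaveOn (u' := -u') hu.neg hd.neg hx hy hxy
  simp only [tangentLine, Pi.neg_apply] at this ⊢
  linarith

theorem tangentLine_le_of_strictConvexOn (hu : StrictConvexOn ℝ s u)
    (hd : HasDerivAt u (u' x) x) (hx : x ∈ s) (hy : y ∈ s) :
    tangentLine u u' x y ≤ u y := by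
  rcases eq_or_ne x y with rfl | hxy
  · simp [tangentLine]
  · exact (tangentLine_lt_of_strictConvexOn hu hd hx hy hxy).le

theorem tangentLine_lt_tangentLine_of_crossing {m₁ m₂ a q : ℝ} (hxa : x < a) (haq : a < q)
    (heq : tangentLine u u' m₁ a = tangentLine u u' m₂ a)
    (hlt : tangentLine u u' m₂ q < tangentLine u u' m₁ q) :
    tangentLine u u' m₁ x < tangentLine u u' m₂ x := by
  unfold tangentLine at *
  have hslope : u' m₂ < u' m₁ := by nlinarith
  nlinarith

theorem chord_lt_of_lt_tangentLine {p q r m w₁ w₂ : ℝ} (hcave : StrictConcaveOn ℝ (Icc p q) u)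
    (hvex : StrictConvexOn ℝ (Icc q r) u) (hd : HasDerivAt u (u' m) m) (hx : x ∈ Icc p q)
    (hm : m ∈ Icc q r) (hw₁ : 0 < w₁) (hw₂ : 0 < w₂) (hw : w₁ + w₂ = 1)
    (hlt : u x < tangentLine u u' m x) :
    w₁ * u x + w₂ * u m < u (w₁ * x + w₂ * m) := by
  have hT {z : ℝ} (hz : z ∈ Icc q r) : u m + u' m * (z - m) ≤ u z :=
    tangentLine_le_of_strictConvexOn hvex hd hm hz
  unfold tangentLine at hlt
  obtain rfl : w₁ = 1 - w₂ := by linarith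
  have hxm : x < m := by
    refine lt_of_le_of_ne (hx.2.trans hm.1) ?_
    rintro rfl
    simp at hlt
  rcases le_or_gt q ((1 - w₂) * x + w₂ * m) with hq | hq
  · have := hT ⟨hq, by nlinarith [hm.2]⟩
    nlinarith
  · -- The tangent line lies above the chord at `q`, so the concave arc from `x` to `q` does too.
    have hxq : x < q := by nlinarith
    obtain ⟨t, ht⟩ : ∃ t, t * (q - x) = w₂ * (m - x) :=
      ⟨w₂ * (m - x) / (q - x), div_mul_cancel₀ _ (by linarith)⟩
    have ht0 : 0 < t := by nlinarith
    have ht1 : t < 1 := by nlinarith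
    have hq' := hT ⟨le_rfl, hm.1.trans hm.2⟩
    have hconc := hcave.2 hx ⟨hx.1.trans hx.2, le_rfl⟩ hxq.ne (by linarith) ht0
      (sub_add_cancel 1 t)
    simp only [smul_eq_mul] at hconc
    rw [show (1 - t) * x + t * q = (1 - w₂) * x + w₂ * m by linear_combination ht] at hconc
    have hwt : w₂ ≤ t := by nlinarith [hm.1]
    linear_combination hconc + t * hq' + (t - w₂) * hlt.le - u' m * ht

theorem exists_supporting_line {φ : ℝ → ℝ} (hφ : ConvexOn ℝ s φ) (hx : x ∈ interior s) :
    ∃ c, ∀ y ∈ s, φ x + c * (y - x) ≤ φ y := by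
  refine ⟨derivWithin φ (Ioi x) x, fun y hy => ?_⟩
  rcases lt_trichotomy x y with h | rfl | h
  · have := hφ.rightDeriv_le_slope_of_mem_interior hx hy h
    rw [slope_def_field, le_div_iff₀ (by linarith)] at this
    linarith
  · simp
  · have := (hφ.slope_le_leftDeriv_of_mem_interior hy hx h).trans
      (hφ.leftDeriv_le_rightDeriv_of_mem_interior hx)
    rw [slope_def_field, div_le_iff₀ (by linarith)] at this
    linarith

end TangentLine

section Payoff

variable {f u : ℝ → ℝ} {x y : ℝ}

/-- The contribution of the pooled interval `(x, y)` to the value of a pooling set: its mass times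
the payoff at its conditional mean. Reversing the interval changes the sign, as for integrals. -/
def pooledPayoff (f u : ℝ → ℝ) (x y : ℝ) : ℝ := (∫ t in x..y, f t) * u (condMean f x y)

/-- The contribution of a fully disclosed interval `(x, y)` to the value of a pooling set. -/
def disclosedPayoff (f u : ℝ → ℝ) (x y : ℝ) : ℝ := ∫ t in x..y, u t * f t

theorem condMean_symm (f : ℝ → ℝ) (x y : ℝ) : condMean f x y = condMean f y x := by
  unfold condMean
  rw [intervalIntegral.integral_symm, intervalIntegral.integral_symm y x, neg_div_neg_eq]

theorem pooledPayoff_symm (f u : ℝ → ℝ) (x y : ℝ) :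
    pooledPayoff f u x y = -pooledPayoff f u y x := by
  unfold pooledPayoff
  rw [condMean_symm, intervalIntegral.integral_symm, neg_mul]

theorem disclosedPayoff_symm (f u : ℝ → ℝ) (x y : ℝ) :
    disclosedPayoff f u x y = -disclosedPayoff f u y x :=
  intervalIntegral.integral_symm y x

@[simp]
theorem pooledPayoff_self (f u : ℝ → ℝ) (x : ℝ) : pooledPayoff f u x x = 0 := by
  simp [pooledPayoff]

@[simp]
theorem disclosedPayoff_self (f u : ℝ → ℝ) (x : ℝ) : disclosedPayoff f u x x = 0 :=
  intervalIntegral.integral_same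

theorem intervalIntegrable_id_mul (hf : IntervalIntegrable f volume x y) :
    IntervalIntegrable (fun t => t * f t) volume x y :=
  hf.continuousOn_mul continuousOn_id

theorem condMean_mem_Ioo (hxy : x < y) (hf : IntervalIntegrable f volume x y)
    (hpos : ∀ t ∈ Ioo x y, 0 < f t) : condMean f x y ∈ Ioo x y := by
  have hmass := intervalIntegral.intervalIntegral_pos_of_pos_on hf hpos hxy
  have hid := intervalIntegrable_id_mul hf
  have hleft : 0 < ∫ t in x..y, (t * f t - x * f t) :=
    intervalIntegral.intervalIntegral_pos_of_pos_on (hid.sub (hf.const_mul x))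
      (fun t ht => by nlinarith [hpos t ht, ht.1]) hxy
  have hright : 0 < ∫ t in x..y, (y * f t - t * f t) :=
    intervalIntegral.intervalIntegral_pos_of_pos_on ((hf.const_mul y).sub hid)
      (fun t ht => by nlinarith [hpos t ht, ht.2]) hxy
  rw [intervalIntegral.integral_sub hid (hf.const_mul x),
    intervalIntegral.integral_const_mul, sub_pos] at hleft
  rw [intervalIntegral.integral_sub (hf.const_mul y) hid,
    intervalIntegral.integral_const_mul, sub_pos] at hright
  exact ⟨(lt_div_iff₀ hmass).2 hleft, (div_lt_iff₀ hmass).2 hright⟩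

theorem pooledPayoff_le_integral_comp {φ k : ℝ → ℝ} (hxy : x < y)
    (hf : IntervalIntegrable f volume x y) (hpos : ∀ t ∈ Ioo x y, 0 < f t)
    (hφ : ConvexOn ℝ (Icc x y) φ) (hk : ∀ t ∈ Ioo x y, k t ∈ Icc x y)
    (hkf : IntervalIntegrable (fun t => k t * f t) volume x y)
    (hφk : IntervalIntegrable (fun t => φ (k t) * f t) volume x y)
    (hmean : ∫ t in x..y, k t * f t = ∫ t in x..y, t * f t) :
    pooledPayoff f φ x y ≤ ∫ t in x..y, φ (k t) * f t := by
  have hmass := intervalIntegral.intervalIntegral_pos_of_pos_on hf hpos hxy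
  have hm := condMean_mem_Ioo hxy hf hpos
  have hm_mul : (∫ t in x..y, f t) * condMean f x y = ∫ t in x..y, t * f t :=
    mul_div_cancel₀ _ hmass.ne'
  set m := condMean f x y with hm_def
  obtain ⟨c, hc⟩ := exists_supporting_line hφ (interior_Icc (a := x) ▸ hm)
  calc pooledPayoff f φ x y
      = ∫ t in x..y, ((φ m - c * m) * f t + c * (k t * f t)) := by
        rw [intervalIntegral.integral_add (hf.const_mul _) (hkf.const_mul _),
          intervalIntegral.integral_const_mul, intervalIntegral.integral_const_mul, hmean, ← hm_mul,
          pooledPayoff, ← hm_def]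
        ring
    _ ≤ ∫ t in x..y, φ (k t) * f t := by
        refine intervalIntegral.integral_mono_on_of_le_Ioo hxy.le
          ((hf.const_mul _).add (hkf.const_mul _)) hφk fun t ht => ?_
        nlinarith [hc _ (hk t ht), hpos t ht]

theorem pooledPayoff_le_disclosedPayoff (hxy : x < y) (hf : IntervalIntegrable f volume x y)
    (hpos : ∀ t ∈ Ioo x y, 0 < f t) (hu : ConvexOn ℝ (Icc x y) u)
    (huf : IntervalIntegrable (fun t => u t * f t) volume x y) :
    pooledPayoff f u x y ≤ disclosedPayoff f u x y :=
  pooledPayoff_le_integral_comp (k := id) hxy hf hpos hu (fun _ ht => Ioo_subset_Icc_self ht)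
    (intervalIntegrable_id_mul hf) huf rfl

end Payoff

namespace IsDensity

variable {f u g : ℝ → ℝ} {x y z : ℝ}

theorem intervalIntegrable (hf : IsDensity f) (hx : x ∈ Icc (0 : ℝ) 1) (hy : y ∈ Icc (0 : ℝ) 1) :
    IntervalIntegrable f volume x y :=
  (((intervalIntegrable_iff_integrableOn_Icc_of_le zero_le_one).2 hf.2.1).mono_set
    (uIcc_of_le (zero_le_one' ℝ) ▸ uIcc_subset_Icc hx hy))

theorem intervalIntegrable_mul (hf : IsDensity f) (hg : ContinuousOn g (Icc 0 1))
    (hx : x ∈ Icc (0 : ℝ) 1) (hy : y ∈ Icc (0 : ℝ) 1) :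
    IntervalIntegrable (fun t => g t * f t) volume x y :=
  (hf.intervalIntegrable hx hy).continuousOn_mul (hg.mono (uIcc_subset_Icc hx hy))

theorem pos_of_mem_Ioo (hf : IsDensity f) (hx : x ∈ Icc (0 : ℝ) 1) (hy : y ∈ Icc (0 : ℝ) 1) :
    ∀ t ∈ Ioo x y, 0 < f t :=
  fun t ht => hf.1 t ⟨hx.1.trans ht.1.le, ht.2.le.trans hy.2⟩

theorem mass_pos (hf : IsDensity f) (hx : x ∈ Icc (0 : ℝ) 1) (hy : y ∈ Icc (0 : ℝ) 1)
    (hxy : x < y) : 0 < ∫ t in x..y, f t :=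
  intervalIntegral.intervalIntegral_pos_of_pos_on (hf.intervalIntegrable hx hy)
    (hf.pos_of_mem_Ioo hx hy) hxy

theorem mass_ne_zero (hf : IsDensity f) (hx : x ∈ Icc (0 : ℝ) 1) (hy : y ∈ Icc (0 : ℝ) 1)
    (hxy : x ≠ y) : (∫ t in x..y, f t) ≠ 0 := by
  rcases hxy.lt_or_gt with h | h
  · exact (hf.mass_pos hx hy h).ne'
  · rw [intervalIntegral.integral_symm]
    exact neg_ne_zero.2 (hf.mass_pos hy hx h).ne'

theorem mass_add (hf : IsDensity f) (hx : x ∈ Icc (0 : ℝ) 1) (hy : y ∈ Icc (0 : ℝ) 1)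
    (hz : z ∈ Icc (0 : ℝ) 1) : (∫ t in x..y, f t) + ∫ t in y..z, f t = ∫ t in x..z, f t :=
  intervalIntegral.integral_add_adjacent_intervals (hf.intervalIntegrable hx hy)
    (hf.intervalIntegrable hy hz)

theorem mass_mul_condMean (hf : IsDensity f) (hx : x ∈ Icc (0 : ℝ) 1) (hy : y ∈ Icc (0 : ℝ) 1) :
    (∫ t in x..y, f t) * condMean f x y = ∫ t in x..y, t * f t := by
  rcases eq_or_ne x y with rfl | hxy
  · simp
  · exact mul_div_cancel₀ _ (hf.mass_ne_zero hx hy hxy)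

theorem mass_mul_condMean_add (hf : IsDensity f) (hx : x ∈ Icc (0 : ℝ) 1)
    (hy : y ∈ Icc (0 : ℝ) 1) (hz : z ∈ Icc (0 : ℝ) 1) :
    (∫ t in x..y, f t) * condMean f x y + (∫ t in y..z, f t) * condMean f y z
      = (∫ t in x..z, f t) * condMean f x z := by
  rw [hf.mass_mul_condMean hx hy, hf.mass_mul_condMean hy hz, hf.mass_mul_condMean hx hz]
  exact intervalIntegral.integral_add_adjacent_intervals
    (hf.intervalIntegrable_mul continuousOn_id hx hy)
    (hf.intervalIntegrable_mul continuousOn_id hy hz)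

theorem condMean_mem_Ioo (hf : IsDensity f) (hx : x ∈ Icc (0 : ℝ) 1) (hy : y ∈ Icc (0 : ℝ) 1)
    (hxy : x < y) : condMean f x y ∈ Ioo x y :=
  _root_.condMean_mem_Ioo hxy (hf.intervalIntegrable hx hy) (hf.pos_of_mem_Ioo hx hy)

theorem condMean_mem_Icc (hf : IsDensity f) (hx : x ∈ Icc (0 : ℝ) 1) (hy : y ∈ Icc (0 : ℝ) 1) :
    condMean f x y ∈ Icc (0 : ℝ) 1 := by
  rcases lt_trichotomy x y with h | rfl | h
  · exact Ioo_subset_Icc_self.trans (Icc_subset_Icc hx.1 hy.2) (hf.condMean_mem_Ioo hx hy h)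
  · simp [condMean]
  · rw [condMean_symm]
    exact Ioo_subset_Icc_self.trans (Icc_subset_Icc hy.1 hx.2) (hf.condMean_mem_Ioo hy hx h)

theorem pooledPayoff_add_lt (hf : IsDensity f) (hx : x ∈ Icc (0 : ℝ) 1) (hy : y ∈ Icc (0 : ℝ) 1)
    (hz : z ∈ Icc (0 : ℝ) 1) (hxy : x < y) (hyz : y < z)
    (hchord : ∀ w₁ w₂ : ℝ, 0 < w₁ → 0 < w₂ → w₁ + w₂ = 1 →
      w₁ * u (condMean f x y) + w₂ * u (condMean f y z)
        < u (w₁ * condMean f x y + w₂ * condMean f y z)) :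
    pooledPayoff f u x y + pooledPayoff f u y z < pooledPayoff f u x z := by
  have hxyM := hf.mass_pos hx hy hxy
  have hyzM := hf.mass_pos hy hz hyz
  have hxzM := hf.mass_pos hx hz (hxy.trans hyz)
  have hmean : (∫ t in x..y, f t) / (∫ t in x..z, f t) * condMean f x y
      + (∫ t in y..z, f t) / (∫ t in x..z, f t) * condMean f y z = condMean f x z := by
    field_simp
    linear_combination hf.mass_mul_condMean_add hx hy hz
  have h := hchord _ _ (div_pos hxyM hxzM) (div_pos hyzM hxzM)
    (by rw [← add_div, hf.mass_add hx hy hz, div_self hxzM.ne'])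
  rw [hmean, div_mul_eq_mul_div, div_mul_eq_mul_div, ← add_div, div_lt_iff₀ hxzM] at h
  unfold pooledPayoff
  linarith

theorem pooledPayoff_add_lt_of_strictConcaveOn {s : Set ℝ} (hf : IsDensity f)
    (hu : StrictConcaveOn ℝ s u) (hx : x ∈ Icc (0 : ℝ) 1) (hy : y ∈ Icc (0 : ℝ) 1)
    (hz : z ∈ Icc (0 : ℝ) 1) (hxy : x < y) (hyz : y < z) (hxy' : condMean f x y ∈ s)
    (hyz' : condMean f y z ∈ s) :
    pooledPayoff f u x y + pooledPayoff f u y z < pooledPayoff f u x z := by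
  have hne : condMean f x y ≠ condMean f y z :=
    ((hf.condMean_mem_Ioo hx hy hxy).2.trans (hf.condMean_mem_Ioo hy hz hyz).1).ne
  exact hf.pooledPayoff_add_lt hx hy hz hxy hyz fun _ _ h₁ h₂ h => hu.2 hxy' hyz' hne h₁ h₂ h

theorem disclosedPayoff_add (hf : IsDensity f) (hu : ContinuousOn u (Icc 0 1))
    (hx : x ∈ Icc (0 : ℝ) 1) (hy : y ∈ Icc (0 : ℝ) 1) (hz : z ∈ Icc (0 : ℝ) 1) :
    disclosedPayoff f u x y + disclosedPayoff f u y z = disclosedPayoff f u x z :=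
  intervalIntegral.integral_add_adjacent_intervals (hf.intervalIntegrable_mul hu hx hy)
    (hf.intervalIntegrable_mul hu hy hz)

end IsDensity

section Reflection

variable {f u : ℝ → ℝ} {x y : ℝ}

theorem intervalIntegral_reflect (g : ℝ → ℝ) (x y : ℝ) :
    ∫ t in x..y, g (1 - t) = ∫ t in (1 - y)..(1 - x), g t :=
  intervalIntegral.integral_comp_sub_left g 1

theorem IsDensity.reflect (hf : IsDensity f) : IsDensity fun t => f (1 - t) := by
  refine ⟨fun θ hθ => hf.1 _ (Icc.mem_iff_one_sub_mem.1 hθ), ?_, ?_⟩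
  · rw [← intervalIntegrable_iff_integrableOn_Icc_of_le zero_le_one]
    simpa using (hf.intervalIntegrable unitInterval.one_mem unitInterval.zero_mem).comp_sub_left 1
  · simpa [intervalIntegral_reflect f] using hf.2.2

theorem IsDensity.condMean_reflect (hf : IsDensity f) (hx : x ∈ Icc (0 : ℝ) 1)
    (hy : y ∈ Icc (0 : ℝ) 1) (hxy : x ≠ y) :
    condMean (fun t => f (1 - t)) x y = 1 - condMean f (1 - y) (1 - x) := by
  have hx' := Icc.mem_iff_one_sub_mem.1 hx
  have hy' := Icc.mem_iff_one_sub_mem.1 hy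
  have hmass := hf.mass_ne_zero hy' hx' (by simpa using hxy.symm)
  have hmean : ∫ t in x..y, t * f (1 - t) = ∫ t in (1 - y)..(1 - x), (f t - t * f t) := by
    rw [← intervalIntegral_reflect fun t => f t - t * f t]
    congr 1
    ext t
    ring
  unfold condMean
  rw [hmean, intervalIntegral_reflect f, intervalIntegral.integral_sub
    (hf.intervalIntegrable hy' hx')
    (intervalIntegrable_id_mul (hf.intervalIntegrable hy' hx')),
    sub_div, div_self hmass]

theorem IsDensity.pooledPayoff_reflect (hf : IsDensity f) (hx : x ∈ Icc (0 : ℝ) 1)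
    (hy : y ∈ Icc (0 : ℝ) 1) :
    pooledPayoff (fun t => f (1 - t)) (fun t => u (1 - t)) x y
      = pooledPayoff f u (1 - y) (1 - x) := by
  rcases eq_or_ne x y with rfl | hxy
  · simp
  · unfold pooledPayoff
    rw [hf.condMean_reflect hx hy hxy, intervalIntegral_reflect f]
    simp only [sub_sub_cancel]

theorem disclosedPayoff_reflect (f u : ℝ → ℝ) (x y : ℝ) :
    disclosedPayoff (fun t => f (1 - t)) (fun t => u (1 - t)) x y
      = disclosedPayoff f u (1 - y) (1 - x) :=
  intervalIntegral_reflect (fun t => u t * f t) x y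

theorem tangentLine_reflect (u u' : ℝ → ℝ) (m x : ℝ) :
    tangentLine (fun t => u (1 - t)) (fun t => -u' (1 - t)) m x
      = tangentLine u u' (1 - m) (1 - x) := by
  unfold tangentLine
  ring

theorem strictConcaveOn_reflect {a b : ℝ} (hu : StrictConcaveOn ℝ (Icc a b) u) :
    StrictConcaveOn ℝ (Icc (1 - b) (1 - a)) fun t => u (1 - t) := by
  have hmem {t : ℝ} (ht : t ∈ Icc (1 - b) (1 - a)) : 1 - t ∈ Icc a b :=
    ⟨by linarith [ht.2], by linarith [ht.1]⟩
  refine ⟨convex_Icc _ _, fun s hs t ht hst v w hv hw hvw => ?_⟩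
  convert hu.2 (hmem hs) (hmem ht) (by simpa using hst) hv hw hvw using 2
  simp only [smul_eq_mul]
  linear_combination -hvw

end Reflection

namespace IsDensity

variable {f u g : ℝ → ℝ} {a c : ℝ}

theorem continuousOn_disclosedPayoff_right (hf : IsDensity f) (hu : ContinuousOn u (Icc 0 1))
    (hc : c ∈ Icc (0 : ℝ) 1) : ContinuousOn (fun t => disclosedPayoff f u c t) (Icc 0 1) := by
  rw [← uIcc_of_le (zero_le_one' ℝ)] at hc ⊢
  exact intervalIntegral.continuousOn_primitive_interval'
    (hf.intervalIntegrable_mul hu unitInterval.zero_mem unitInterval.one_mem) hc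

theorem continuousOn_disclosedPayoff_left (hf : IsDensity f) (hu : ContinuousOn u (Icc 0 1))
    (hc : c ∈ Icc (0 : ℝ) 1) : ContinuousOn (fun t => disclosedPayoff f u t c) (Icc 0 1) := by
  simp only [disclosedPayoff_symm f u _ c]
  exact (hf.continuousOn_disclosedPayoff_right hu hc).neg

theorem continuousOn_mass_right (hf : IsDensity f) (hc : c ∈ Icc (0 : ℝ) 1) :
    ContinuousOn (fun t => ∫ s in c..t, f s) (Icc 0 1) := by
  simpa [disclosedPayoff] using hf.continuousOn_disclosedPayoff_right
    (u := fun _ => 1) continuousOn_const hc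

theorem continuousWithinAt_condMean_right (hf : IsDensity f) (hc : c ∈ Icc (0 : ℝ) 1)
    (ha : a ∈ Icc (0 : ℝ) 1) (hca : c ≠ a) :
    ContinuousWithinAt (fun t => condMean f c t) (Icc 0 1) a :=
  (hf.continuousOn_disclosedPayoff_right continuousOn_id hc a ha).div
    (hf.continuousOn_mass_right hc a ha) (hf.mass_ne_zero hc ha hca)

theorem continuousOn_pooledPayoff_right (hf : IsDensity f) (hu : ContinuousOn u (Icc 0 1))
    (hc : c ∈ Icc (0 : ℝ) 1) : ContinuousOn (fun t => pooledPayoff f u c t) (Icc 0 1) := by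
  intro a ha
  have hmass := hf.continuousOn_mass_right hc a ha
  rcases eq_or_ne c a with rfl | hca
  · -- Here `condMean f c c = 0` is a junk value; what matters is that `u` is bounded.
    obtain ⟨K, hK⟩ := isCompact_Icc.exists_bound_of_continuousOn hu
    have hbound : Tendsto (fun t => |∫ s in c..t, f s| * K) (𝓝[Icc 0 1] c) (𝓝 0) := by
      simpa using hmass.tendsto.abs.mul_const K
    simp only [ContinuousWithinAt, pooledPayoff_self]
    refine squeeze_zero_norm' ?_ hbound
    filter_upwards [self_mem_nhdsWithin] with t ht
    rw [pooledPayoff, norm_mul, Real.norm_eq_abs]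
    exact mul_le_mul_of_nonneg_left (hK _ (hf.condMean_mem_Icc hc ht)) (abs_nonneg _)
  · exact hmass.mul ((hu _ (hf.condMean_mem_Icc hc ha)).comp
      (hf.continuousWithinAt_condMean_right hc ha hca) fun t ht => hf.condMean_mem_Icc hc ht)

theorem continuousOn_pooledPayoff_left (hf : IsDensity f) (hu : ContinuousOn u (Icc 0 1))
    (hc : c ∈ Icc (0 : ℝ) 1) : ContinuousOn (fun t => pooledPayoff f u t c) (Icc 0 1) := by
  simp only [pooledPayoff_symm f u _ c]
  exact (hf.continuousOn_pooledPayoff_right hu hc).neg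

theorem tendsto_average (hf : IsDensity f) (hg : ContinuousOn g (Icc 0 1))
    (ha : a ∈ Ioo (0 : ℝ) 1) :
    Tendsto (fun t => (∫ s in a..t, g s * f s) / ∫ s in a..t, f s) (𝓝[≠] a) (𝓝 (g a)) := by
  have ha' := Ioo_subset_Icc_self ha
  have hmean (t : ℝ) (ht : t ∈ Icc (0 : ℝ) 1) (hne : t ≠ a) :
      ∃ c ∈ uIcc a t, g c = (∫ s in a..t, g s * f s) / ∫ s in a..t, f s := by
    have hsub : uIcc a t ⊆ Icc 0 1 := uIcc_subset_Icc ha' ht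
    obtain ⟨c, hc, h⟩ := exists_eq_const_mul_intervalIntegral_of_nonneg (hg.mono hsub)
      (hf.intervalIntegrable ha' ht) fun s hs => (hf.1 s (hsub (uIoc_subset_uIcc hs))).le
    exact ⟨c, hc, by rw [h, mul_div_cancel_right₀ _ (hf.mass_ne_zero ha' ht hne.symm)]⟩
  rw [Metric.tendsto_nhds]
  intro ε hε
  obtain ⟨δ, hδ, hball⟩ := Metric.continuousAt_iff.1
    (hg.continuousAt (Icc_mem_nhds ha.1 ha.2)) ε hε
  filter_upwards [mem_nhdsWithin_of_mem_nhds (Icc_mem_nhds ha.1 ha.2), self_mem_nhdsWithin,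
    mem_nhdsWithin_of_mem_nhds (Metric.ball_mem_nhds a hδ)] with t ht hne htδ
  obtain ⟨c, hc, hgc⟩ := hmean t ht hne
  rw [← hgc]
  exact hball ((abs_sub_left_of_mem_uIcc hc).trans_lt htδ)

end IsDensity

section MassDerivative

variable {f u u' g k : ℝ → ℝ} {D E a b c : ℝ}

/-- `g` has derivative `D` at `a` with respect to the distribution with density `f`. Since `f` need
not be continuous, this, rather than the ordinary derivative, is what first-order conditions for the
endpoints of a pooled interval are about. -/
def HasMassDerivAt (f g : ℝ → ℝ) (D a : ℝ) : Prop :=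
  Tendsto (fun t => (g t - g a) / ∫ s in a..t, f s) (𝓝[≠] a) (𝓝 D)

theorem HasMassDerivAt.add (hg : HasMassDerivAt f g D a) (hk : HasMassDerivAt f k E a) :
    HasMassDerivAt f (fun t => g t + k t) (D + E) a :=
  (Tendsto.add hg hk).congr fun t => by ring

theorem HasMassDerivAt.neg (hg : HasMassDerivAt f g D a) :
    HasMassDerivAt f (fun t => -g t) (-D) a :=
  (Tendsto.neg hg).congr fun t => by ring

namespace IsDensity

theorem massDeriv_nonpos (hf : IsDensity f) (ha : a ∈ Icc (0 : ℝ) 1) (hb : b ∈ Icc (0 : ℝ) 1)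
    (hab : a < b) (hg : HasMassDerivAt f g D a) (hmax : IsMaxOn g (Icc a b) a) : D ≤ 0 := by
  refine le_of_tendsto (hg.mono_left (nhdsGT_le_nhdsNE a)) ?_
  filter_upwards [Ioc_mem_nhdsGT hab] with t ht
  exact div_nonpos_of_nonpos_of_nonneg (sub_nonpos.2 (hmax ⟨ht.1.le, ht.2⟩))
    (hf.mass_pos ha ⟨ha.1.trans ht.1.le, ht.2.trans hb.2⟩ ht.1).le

theorem massDeriv_nonneg (hf : IsDensity f) (ha : a ∈ Icc (0 : ℝ) 1) (hb : b ∈ Icc (0 : ℝ) 1)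
    (hba : b < a) (hg : HasMassDerivAt f g D a) (hmax : IsMaxOn g (Icc b a) a) : 0 ≤ D := by
  refine ge_of_tendsto (hg.mono_left (nhdsLT_le_nhdsNE a)) ?_
  filter_upwards [Ico_mem_nhdsLT hba] with t ht
  rw [intervalIntegral.integral_symm]
  exact div_nonneg_of_nonpos (sub_nonpos.2 (hmax ⟨ht.1, ht.2.le⟩))
    (neg_nonpos.2 (hf.mass_pos ⟨hb.1.trans ht.1, ht.2.le.trans ha.2⟩ ha ht.2).le)

theorem massDeriv_eq_zero (hf : IsDensity f) (hb : b ∈ Icc (0 : ℝ) 1) (hc : c ∈ Icc (0 : ℝ) 1)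
    (ha : a ∈ Ioo b c) (hg : HasMassDerivAt f g D a) (hmax : IsMaxOn g (Icc b c) a) : D = 0 := by
  have ha' : a ∈ Icc (0 : ℝ) 1 := ⟨hb.1.trans ha.1.le, ha.2.le.trans hc.2⟩
  exact le_antisymm
    (hf.massDeriv_nonpos ha' hc ha.2 hg (hmax.on_subset (Icc_subset_Icc_left ha.1.le)))
    (hf.massDeriv_nonneg ha' hb ha.1 hg (hmax.on_subset (Icc_subset_Icc_right ha.2.le)))

theorem hasMassDerivAt_disclosedPayoff_right (hf : IsDensity f) (hu : ContinuousOn u (Icc 0 1))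
    (hc : c ∈ Icc (0 : ℝ) 1) (ha : a ∈ Ioo (0 : ℝ) 1) :
    HasMassDerivAt f (fun t => disclosedPayoff f u c t) (u a) a := by
  refine (hf.tendsto_average hu ha).congr' ?_
  filter_upwards [mem_nhdsWithin_of_mem_nhds (Icc_mem_nhds ha.1 ha.2)] with t ht
  rw [← hf.disclosedPayoff_add hu hc (Ioo_subset_Icc_self ha) ht, add_sub_cancel_left,
    disclosedPayoff]

theorem hasMassDerivAt_disclosedPayoff_left (hf : IsDensity f) (hu : ContinuousOn u (Icc 0 1))
    (hc : c ∈ Icc (0 : ℝ) 1) (ha : a ∈ Ioo (0 : ℝ) 1) :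
    HasMassDerivAt f (fun t => disclosedPayoff f u t c) (-u a) a := by
  simp only [disclosedPayoff_symm f u _ c]
  exact (hf.hasMassDerivAt_disclosedPayoff_right hu hc ha).neg

theorem hasMassDerivAt_pooledPayoff_right (hf : IsDensity f) (hc : c ∈ Icc (0 : ℝ) 1)
    (ha : a ∈ Ioo (0 : ℝ) 1) (hca : c ≠ a)
    (hd : HasDerivAt u (u' (condMean f c a)) (condMean f c a)) :
    HasMassDerivAt f (fun t => pooledPayoff f u c t) (tangentLine u u' (condMean f c a) a) a := by
  have ha' := Ioo_subset_Icc_self ha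
  have hmean : Tendsto (fun t => condMean f c t) (𝓝[≠] a) (𝓝 (condMean f c a)) :=
    ((hf.continuousWithinAt_condMean_right hc ha' hca).continuousAt
      (Icc_mem_nhds ha.1 ha.2)).tendsto.mono_left nhdsWithin_le_nhds
  set m := condMean f c a with hm
  have hslope : Tendsto (fun t => dslope u m (condMean f c t)) (𝓝[≠] a) (𝓝 (u' m)) := by
    rw [← hd.deriv, ← dslope_same]
    exact (continuousAt_dslope_same.2 hd.differentiableAt).tendsto.comp hmean
  have haverage : Tendsto (fun t => condMean f a t) (𝓝[≠] a) (𝓝 a) :=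
    hf.tendsto_average continuousOn_id ha
  refine ((hd.continuousAt.tendsto.comp hmean).add
    (hslope.mul (haverage.sub hmean))).congr' ?_
  filter_upwards [mem_nhdsWithin_of_mem_nhds (Icc_mem_nhds ha.1 ha.2), self_mem_nhdsWithin]
    with t ht hta
  rw [eq_div_iff (hf.mass_ne_zero ha' ht (Ne.symm hta)), pooledPayoff, pooledPayoff, ← hm,
    Function.comp_apply]
  have hmass := hf.mass_add hc ha' ht
  have hmoment := hf.mass_mul_condMean_add hc ha' ht
  have hdslope : (condMean f c t - m) * dslope u m (condMean f c t)
      = u (condMean f c t) - u m := sub_smul_dslope u m (condMean f c t)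
  linear_combination (dslope u m (condMean f c t)) * hmoment
    + (∫ s in c..a, f s) * hdslope
    + (u (condMean f c t) - dslope u m (condMean f c t) * condMean f c t) * hmass

theorem hasMassDerivAt_pooledPayoff_left (hf : IsDensity f) (hc : c ∈ Icc (0 : ℝ) 1)
    (ha : a ∈ Ioo (0 : ℝ) 1) (hca : c ≠ a)
    (hd : HasDerivAt u (u' (condMean f a c)) (condMean f a c)) :
    HasMassDerivAt f (fun t => pooledPayoff f u t c) (-tangentLine u u' (condMean f a c) a) a := by
  simp only [pooledPayoff_symm f u _ c]
  rw [condMean_symm] at hd ⊢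
  exact (hf.hasMassDerivAt_pooledPayoff_right hc ha hca hd).neg

end IsDensity

end MassDerivative

/-- `u` is strictly concave on `[0, θL]`, strictly convex on `[θL, θH]` and strictly concave on
`[θH, 1]`, with derivative `u'`. -/
structure IsConcaveConvexConcave (u u' : ℝ → ℝ) (θL θH : ℝ) : Prop where
  left_pos : 0 < θL
  left_lt_right : θL < θH
  right_lt_one : θH < 1
  hasDerivAt : ∀ θ ∈ Icc (0 : ℝ) 1, HasDerivAt u (u' θ) θ
  strictConcaveOn_left : StrictConcaveOn ℝ (Icc 0 θL) u
  strictConvexOn_middle : StrictConvexOn ℝ (Icc θL θH) u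
  strictConcaveOn_right : StrictConcaveOn ℝ (Icc θH 1) u

/-- The value of the pooling set `[0, z) ∪ (z, 1]`. -/
def splitPayoff (f u : ℝ → ℝ) (z : ℝ) : ℝ := pooledPayoff f u 0 z + pooledPayoff f u z 1

/-- The value of the pooling set `[0, a) ∪ (b, 1]`, which discloses the states in `[a, b]`. -/
def middleDisclosurePayoff (f u : ℝ → ℝ) (a b : ℝ) : ℝ :=
  pooledPayoff f u 0 a + disclosedPayoff f u a b + pooledPayoff f u b 1

@[simp]
theorem middleDisclosurePayoff_self (f u : ℝ → ℝ) (z : ℝ) :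
    middleDisclosurePayoff f u z z = splitPayoff f u z := by
  simp [middleDisclosurePayoff, splitPayoff]

theorem IsDensity.splitPayoff_reflect {f u : ℝ → ℝ} {z : ℝ} (hf : IsDensity f)
    (hz : z ∈ Icc (0 : ℝ) 1) :
    splitPayoff (fun t => f (1 - t)) (fun t => u (1 - t)) z = splitPayoff f u (1 - z) := by
  rw [splitPayoff, hf.pooledPayoff_reflect unitInterval.zero_mem hz,
    hf.pooledPayoff_reflect hz unitInterval.one_mem, sub_self, sub_zero, add_comm, splitPayoff]

theorem IsDensity.middleDisclosurePayoff_reflect {f u : ℝ → ℝ} {a b : ℝ} (hf : IsDensity f)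
    (ha : a ∈ Icc (0 : ℝ) 1) (hb : b ∈ Icc (0 : ℝ) 1) :
    middleDisclosurePayoff (fun t => f (1 - t)) (fun t => u (1 - t)) a b
      = middleDisclosurePayoff f u (1 - b) (1 - a) := by
  unfold middleDisclosurePayoff
  rw [hf.pooledPayoff_reflect unitInterval.zero_mem ha, disclosedPayoff_reflect,
    hf.pooledPayoff_reflect hb unitInterval.one_mem, sub_self, sub_zero]
  ring

/-- Lower and upper cutoffs at which the tangent lines at the means of the two end pools touch `u`,
as in an optimal pooling set that discloses exactly the states between two cutoffs. -/
def HasTangentPair (f u u' : ℝ → ℝ) (θL θH : ℝ) : Prop :=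
  ∃ a ∈ Ioo θL θH, ∃ b ∈ Ioo θL θH, a < b ∧
    tangentLine u u' (condMean f 0 a) a = u a ∧ tangentLine u u' (condMean f b 1) b = u b

namespace IsConcaveConvexConcave

variable {f u u' : ℝ → ℝ} {θL θH a b c d z : ℝ}

theorem continuousOn (hu : IsConcaveConvexConcave u u' θL θH) : ContinuousOn u (Icc 0 1) :=
  fun θ hθ => (hu.hasDerivAt θ hθ).continuousAt.continuousWithinAt

theorem left_mem_Icc (hu : IsConcaveConvexConcave u u' θL θH) : θL ∈ Icc (0 : ℝ) 1 :=
  ⟨hu.left_pos.le, (hu.left_lt_right.trans hu.right_lt_one).le⟩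

theorem right_mem_Icc (hu : IsConcaveConvexConcave u u' θL θH) : θH ∈ Icc (0 : ℝ) 1 :=
  ⟨(hu.left_pos.trans hu.left_lt_right).le, hu.right_lt_one.le⟩

theorem reflect (hu : IsConcaveConvexConcave u u' θL θH) :
    IsConcaveConvexConcave (fun t => u (1 - t)) (fun t => -u' (1 - t)) (1 - θH) (1 - θL) where
  left_pos := sub_pos.2 hu.right_lt_one
  left_lt_right := sub_lt_sub_left hu.left_lt_right 1
  right_lt_one := sub_lt_self 1 hu.left_pos
  hasDerivAt θ hθ := (hu.hasDerivAt _ (Icc.mem_iff_one_sub_mem.1 hθ)).comp_const_sub 1 θ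
  strictConcaveOn_left := by simpa using strictConcaveOn_reflect hu.strictConcaveOn_right
  strictConvexOn_middle := by
    simpa only [Pi.neg_def, neg_neg] using
      (strictConcaveOn_reflect hu.strictConvexOn_middle.neg).neg
  strictConcaveOn_right := by simpa using strictConcaveOn_reflect hu.strictConcaveOn_left

theorem pooledPayoff_add_lt_of_tangentLine_eq (hu : IsConcaveConvexConcave u u' θL θH)
    (hf : IsDensity f) (ha : a ∈ Ioo 0 θL) (hc : c ∈ Ioc a 1) (hmean : condMean f a c ≤ θH)
    (heq : tangentLine u u' (condMean f 0 a) a = tangentLine u u' (condMean f a c) a) :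
    pooledPayoff f u 0 a + pooledPayoff f u a c < pooledPayoff f u 0 c := by
  have ha₁ : a ∈ Icc (0 : ℝ) 1 := ⟨ha.1.le, ha.2.le.trans hu.left_mem_Icc.2⟩
  have hc₁ : c ∈ Icc (0 : ℝ) 1 := ⟨ha.1.le.trans hc.1.le, hc.2⟩
  have hmL := hf.condMean_mem_Ioo unitInterval.zero_mem ha₁ ha.1
  have hmR := hf.condMean_mem_Ioo ha₁ hc₁ hc.1
  have hmL' : condMean f 0 a ∈ Icc 0 θL := ⟨hmL.1.le, hmL.2.le.trans ha.2.le⟩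
  rcases le_total (condMean f a c) θL with hle | hge
  · exact hf.pooledPayoff_add_lt_of_strictConcaveOn hu.strictConcaveOn_left unitInterval.zero_mem
      ha₁ hc₁ ha.1 hc.1 hmL' ⟨ha.1.le.trans hmR.1.le, hle⟩
  · -- The lower tangent line is above the upper one at `θL`, hence below it left of `a`.
    have hlower : u θL < tangentLine u u' (condMean f 0 a) θL :=
      lt_tangentLine_of_strictConcaveOn hu.strictConcaveOn_left
        (hu.hasDerivAt _ (hf.condMean_mem_Icc unitInterval.zero_mem ha₁)) hmL'
        ⟨hu.left_pos.le, le_rfl⟩ (hmL.2.trans ha.2).ne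
    have hd := hu.hasDerivAt _ (hf.condMean_mem_Icc ha₁ hc₁)
    have hupper : tangentLine u u' (condMean f a c) θL ≤ u θL :=
      tangentLine_le_of_strictConvexOn hu.strictConvexOn_middle hd ⟨hge, hmean⟩
        ⟨le_rfl, hu.left_lt_right.le⟩
    have hlt := tangentLine_lt_tangentLine_of_crossing hmL.2 ha.2 heq (hupper.trans_lt hlower)
    rw [tangentLine, sub_self, mul_zero, add_zero] at hlt
    exact hf.pooledPayoff_add_lt unitInterval.zero_mem ha₁ hc₁ ha.1 hc.1 fun w₁ w₂ h₁ h₂ h =>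
      chord_lt_of_lt_tangentLine hu.strictConcaveOn_left hu.strictConvexOn_middle hd hmL'
        ⟨hge, hmean⟩ h₁ h₂ h hlt

theorem tangentLine_eq_of_isMaxOn (hu : IsConcaveConvexConcave u u' θL θH) (hf : IsDensity f)
    (hc : c ∈ Icc (0 : ℝ) 1) (ha : a ∈ Ioo 0 c)
    (hmax : IsMaxOn (fun t => pooledPayoff f u 0 t + pooledPayoff f u t c) (Icc 0 c) a) :
    tangentLine u u' (condMean f 0 a) a = tangentLine u u' (condMean f a c) a := by
  have ha₁ : a ∈ Ioo (0 : ℝ) 1 := ⟨ha.1, ha.2.trans_le hc.2⟩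
  have ha₂ := Ioo_subset_Icc_self ha₁
  have hderiv := (hf.hasMassDerivAt_pooledPayoff_right unitInterval.zero_mem ha₁ ha.1.ne
      (hu.hasDerivAt _ (hf.condMean_mem_Icc unitInterval.zero_mem ha₂))).add
    (hf.hasMassDerivAt_pooledPayoff_left hc ha₁ ha.2.ne'
      (hu.hasDerivAt _ (hf.condMean_mem_Icc ha₂ hc)))
  exact add_neg_eq_zero.1 (hf.massDeriv_eq_zero unitInterval.zero_mem hc ha hderiv hmax)

theorem exists_lower_cut (hu : IsConcaveConvexConcave u u' θL θH) (hf : IsDensity f)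
    (hc : c ∈ Icc (0 : ℝ) 1) (ha : a ∈ Icc 0 c) :
    ∃ a' ∈ Icc 0 c, pooledPayoff f u 0 a + pooledPayoff f u a c
        ≤ pooledPayoff f u 0 a' + pooledPayoff f u a' c ∧
      (a' = c ∨ a' < c ∧ (θL ≤ a' ∨ θH < condMean f a' c)) := by
  have hsub : Icc 0 c ⊆ Icc (0 : ℝ) 1 := Icc_subset_Icc_right hc.2
  obtain ⟨t, ht, hmax⟩ := isCompact_Icc.exists_isMaxOn ⟨a, ha⟩
    (((hf.continuousOn_pooledPayoff_right hu.continuousOn unitInterval.zero_mem).add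
      (hf.continuousOn_pooledPayoff_left hu.continuousOn hc)).mono hsub)
  rcases ht.1.eq_or_lt with rfl | ht0
  · exact ⟨c, ⟨hc.1, le_rfl⟩, by simpa using hmax ha, Or.inl rfl⟩
  refine ⟨t, ht, hmax ha, ?_⟩
  rcases ht.2.eq_or_lt with htc | htc
  · exact Or.inl htc
  · refine Or.inr ⟨htc, ?_⟩
    by_contra! hcon
    have heq := hu.tangentLine_eq_of_isMaxOn hf hc ⟨ht0, htc⟩ hmax
    have hlt := hu.pooledPayoff_add_lt_of_tangentLine_eq hf ⟨ht0, hcon.1⟩ ⟨htc, hc.2⟩ hcon.2 heq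
    have hmerge : pooledPayoff f u 0 c + pooledPayoff f u c c
        ≤ pooledPayoff f u 0 t + pooledPayoff f u t c := hmax ⟨hc.1, le_rfl⟩
    rw [pooledPayoff_self, add_zero] at hmerge
    exact hlt.not_ge hmerge

theorem pooledPayoff_le_disclosedPayoff (hu : IsConcaveConvexConcave u u' θL θH)
    (hf : IsDensity f) (ha : θL ≤ a) (hac : a ≤ c) (hc : c ≤ θH) :
    pooledPayoff f u a c ≤ disclosedPayoff f u a c := by
  rcases hac.eq_or_lt with rfl | hac
  · simp
  · have ha₁ : a ∈ Icc (0 : ℝ) 1 :=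
      ⟨hu.left_pos.le.trans ha, (hac.le.trans hc).trans hu.right_lt_one.le⟩
    have hc₁ : c ∈ Icc (0 : ℝ) 1 := ⟨ha₁.1.trans hac.le, hc.trans hu.right_lt_one.le⟩
    exact _root_.pooledPayoff_le_disclosedPayoff hac (hf.intervalIntegrable ha₁ hc₁)
      (hf.pos_of_mem_Ioo ha₁ hc₁)
      (hu.strictConvexOn_middle.convexOn.subset (Icc_subset_Icc ha hc) (convex_Icc a c))
      (hf.intervalIntegrable_mul hu.continuousOn ha₁ hc₁)

theorem exists_lower_disclosure (hu : IsConcaveConvexConcave u u' θL θH) (hf : IsDensity f)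
    (ha : a ∈ Icc 0 c) (hc : c ∈ Icc θL θH) :
    ∃ a' ∈ Icc θL c, pooledPayoff f u 0 a + pooledPayoff f u a c
      ≤ pooledPayoff f u 0 a' + disclosedPayoff f u a' c := by
  have hc₁ : c ∈ Icc (0 : ℝ) 1 := ⟨ha.1.trans ha.2, hc.2.trans hu.right_lt_one.le⟩
  obtain ⟨a', ha', hle, rfl | ⟨hlt, hcut⟩⟩ := hu.exists_lower_cut hf hc₁ ha
  · exact ⟨a', ⟨hc.1, le_rfl⟩, by simpa using hle⟩
  · have hmean := (hf.condMean_mem_Ioo ⟨ha'.1, ha'.2.trans hc₁.2⟩ hc₁ hlt).2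
    have hL : θL ≤ a' := hcut.resolve_right (hmean.le.trans hc.2).not_gt
    exact ⟨a', ⟨hL, ha'.2⟩,
      hle.trans (add_le_add_right (hu.pooledPayoff_le_disclosedPayoff hf hL ha'.2 hc.2) _)⟩

theorem exists_upper_disclosure (hu : IsConcaveConvexConcave u u' θL θH) (hf : IsDensity f)
    (hd : d ∈ Icc θL θH) (hb : b ∈ Icc d 1) :
    ∃ b' ∈ Icc d θH, pooledPayoff f u d b + pooledPayoff f u b 1
      ≤ disclosedPayoff f u d b' + pooledPayoff f u b' 1 := by
  have hd₁ : 1 - d ∈ Icc (0 : ℝ) 1 :=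
    ⟨by linarith [hb.1, hb.2], by linarith [hd.1, hu.left_pos]⟩
  have hb₁ : 1 - b ∈ Icc 0 (1 - d) := ⟨by linarith [hb.2], by linarith [hb.1]⟩
  obtain ⟨a', ha', hle⟩ := hu.reflect.exists_lower_disclosure hf.reflect hb₁
    ⟨by linarith [hd.2], by linarith [hd.1]⟩
  have hb₂ : 1 - b ∈ Icc (0 : ℝ) 1 := ⟨hb₁.1, hb₁.2.trans hd₁.2⟩
  have ha₁ : a' ∈ Icc (0 : ℝ) 1 :=
    ⟨by linarith [ha'.1, hu.right_lt_one], ha'.2.trans hd₁.2⟩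
  rw [hf.pooledPayoff_reflect unitInterval.zero_mem hb₂, hf.pooledPayoff_reflect hb₂ hd₁,
    hf.pooledPayoff_reflect unitInterval.zero_mem ha₁, disclosedPayoff_reflect] at hle
  simp only [sub_zero, sub_sub_cancel] at hle
  exact ⟨1 - a', ⟨by linarith [ha'.2], by linarith [ha'.1]⟩, by linarith⟩

theorem exists_tangent_lower_disclosure (hu : IsConcaveConvexConcave u u' θL θH)
    (hf : IsDensity f) (hb : b ≤ θH) (ha : a ∈ Icc θL b) :
    ∃ a' ∈ Icc θL b, middleDisclosurePayoff f u a b ≤ middleDisclosurePayoff f u a' b ∧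
      (a' = b ∨ θL < a' ∧ tangentLine u u' (condMean f 0 a') a' = u a') := by
  have hb₁ : b ∈ Icc (0 : ℝ) 1 :=
    ⟨hu.left_pos.le.trans (ha.1.trans ha.2), hb.trans hu.right_lt_one.le⟩
  have hsub : Icc θL b ⊆ Icc (0 : ℝ) 1 := Icc_subset_Icc hu.left_pos.le hb₁.2
  obtain ⟨t, ht, hmax⟩ := isCompact_Icc.exists_isMaxOn ⟨a, ha⟩
    (((hf.continuousOn_pooledPayoff_right hu.continuousOn unitInterval.zero_mem).add
      (hf.continuousOn_disclosedPayoff_left hu.continuousOn hb₁)).mono hsub)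
  refine ⟨t, ht, add_le_add_left (hmax ha) _, ?_⟩
  rcases ht.2.eq_or_lt with htb | htb
  · exact Or.inl htb
  have ht₁ : t ∈ Ioo (0 : ℝ) 1 := ⟨hu.left_pos.trans_le ht.1, htb.trans_le hb₁.2⟩
  have ht₂ := Ioo_subset_Icc_self ht₁
  have hmean := hf.condMean_mem_Ioo unitInterval.zero_mem ht₂ ht₁.1
  have hd := hu.hasDerivAt _ (hf.condMean_mem_Icc unitInterval.zero_mem ht₂)
  have hderiv := (hf.hasMassDerivAt_pooledPayoff_right unitInterval.zero_mem ht₁ ht₁.1.ne hd).add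
    (hf.hasMassDerivAt_disclosedPayoff_left hu.continuousOn hb₁ ht₁)
  rcases ht.1.eq_or_lt with rfl | hlt
  · have hslope := hf.massDeriv_nonpos ht₂ hb₁ htb hderiv hmax
    have htangent := lt_tangentLine_of_strictConcaveOn hu.strictConcaveOn_left hd
      (Ioo_subset_Icc_self hmean) ⟨ht₁.1.le, le_rfl⟩ hmean.2.ne
    linarith
  · exact Or.inr ⟨hlt, add_neg_eq_zero.1
      (hf.massDeriv_eq_zero hu.left_mem_Icc hb₁ ⟨hlt, htb⟩ hderiv hmax)⟩

theorem exists_tangent_upper_disclosure (hu : IsConcaveConvexConcave u u' θL θH)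
    (hf : IsDensity f) (ha : θL ≤ a) (hb : b ∈ Icc a θH) :
    ∃ b' ∈ Icc a θH, middleDisclosurePayoff f u a b ≤ middleDisclosurePayoff f u a b' ∧
      (b' = a ∨ b' < θH ∧ tangentLine u u' (condMean f b' 1) b' = u b') := by
  have hb₁ : 1 - b ∈ Icc (1 - θH) (1 - a) := ⟨by linarith [hb.2], by linarith [hb.1]⟩
  obtain ⟨a', ha', hle, htangent⟩ := hu.reflect.exists_tangent_lower_disclosure hf.reflect
    (sub_le_sub_left ha 1) hb₁
  have ha₁ : 1 - a ∈ Icc (0 : ℝ) 1 :=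
    ⟨by linarith [hb.1, hb.2, hu.right_lt_one], by linarith [hu.left_pos]⟩
  have hsub : Icc (1 - θH) (1 - a) ⊆ Icc (0 : ℝ) 1 :=
    Icc_subset_Icc (by linarith [hu.right_lt_one]) ha₁.2
  rw [hf.middleDisclosurePayoff_reflect (hsub hb₁) ha₁,
    hf.middleDisclosurePayoff_reflect (hsub ha') ha₁, sub_sub_cancel, sub_sub_cancel] at hle
  rw [tangentLine_reflect, hf.condMean_reflect unitInterval.zero_mem (hsub ha')
    (by linarith [ha'.1, hu.right_lt_one]), sub_sub_cancel, sub_zero] at htangent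
  refine ⟨1 - a', ⟨by linarith [ha'.2], by linarith [ha'.1]⟩, hle, ?_⟩
  exact htangent.imp (fun h => by linarith) fun h => ⟨by linarith [h.1], h.2⟩

theorem middleDisclosurePayoff_le_of_isMaxOn (hu : IsConcaveConvexConcave u u' θL θH)
    (hf : IsDensity f) (hno : ¬HasTangentPair f u u' θL θH)
    (hz : IsMaxOn (splitPayoff f u) (Icc 0 1) z) (ha : θL ≤ a) (hab : a ≤ b) (hb : b ≤ θH) :
    middleDisclosurePayoff f u a b ≤ splitPayoff f u z := by
  have hsub : Icc θL θH ⊆ Icc (0 : ℝ) 1 := Icc_subset_Icc hu.left_mem_Icc.1 hu.right_mem_Icc.2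
  have hdegenerate (t : ℝ) (ht : t ∈ Icc θL θH) :
      middleDisclosurePayoff f u t t ≤ splitPayoff f u z :=
    (middleDisclosurePayoff_self f u t).trans_le (hz (hsub ht))
  obtain ⟨a', ha', hle, rfl | ⟨hLa, htangentL⟩⟩ :=
    hu.exists_tangent_lower_disclosure hf hb ⟨ha, hab⟩
  · exact hle.trans (hdegenerate a' ⟨ha'.1, hb⟩)
  obtain ⟨b', hb', hle', rfl | ⟨hbH, htangentH⟩⟩ :=
    hu.exists_tangent_upper_disclosure hf ha'.1 ⟨ha'.2, hb⟩
  · exact (hle.trans hle').trans (hdegenerate b' ⟨hLa.le, hb'.2⟩)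
  rcases hb'.1.eq_or_lt with rfl | hlt
  · exact (hle.trans hle').trans (hdegenerate a' ⟨hLa.le, hb'.2⟩)
  · exact absurd ⟨a', ⟨hLa, hlt.trans hbH⟩, b', ⟨hLa.trans hlt, hbH⟩, hlt, htangentL, htangentH⟩ hno

theorem pooledPayoff_add_add_le_of_isMaxOn (hu : IsConcaveConvexConcave u u' θL θH)
    (hf : IsDensity f) (hno : ¬HasTangentPair f u u' θL θH)
    (hz : IsMaxOn (splitPayoff f u) (Icc 0 1) z) (ha : a ∈ Icc 0 b) (hb : b ≤ 1) :
    pooledPayoff f u 0 a + pooledPayoff f u a b + pooledPayoff f u b 1 ≤ splitPayoff f u z := by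
  have hb₁ : b ∈ Icc (0 : ℝ) 1 := ⟨ha.1.trans ha.2, hb⟩
  obtain ⟨a', ha', hle, rfl | ⟨hlt, hcut⟩⟩ := hu.exists_lower_cut hf hb₁ ha
  · rw [pooledPayoff_self, add_zero] at hle
    exact (add_le_add_left hle _).trans (hz hb₁)
  have ha₁ : a' ∈ Icc (0 : ℝ) 1 := ⟨ha'.1, ha'.2.trans hb⟩
  refine (add_le_add_left hle _).trans ?_
  rw [add_assoc]
  have hmean := hf.condMean_mem_Ioo ha₁ hb₁ hlt
  rcases lt_or_ge θH (condMean f a' b) with hH | hH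
  · refine le_trans (add_le_add_right ?_ _) (hz ha₁)
    rcases hb.eq_or_lt with rfl | hb1
    · simp
    · have hmean' := hf.condMean_mem_Ioo hb₁ unitInterval.one_mem hb1
      exact (hf.pooledPayoff_add_lt_of_strictConcaveOn hu.strictConcaveOn_right ha₁ hb₁
        unitInterval.one_mem hlt hb1 ⟨hH.le, hmean.2.le.trans hb⟩
        ⟨(hH.trans (hmean.2.trans hmean'.1)).le, hmean'.2.le⟩).le
  · have hL := hcut.resolve_right hH.not_gt
    obtain ⟨b', hb', hle'⟩ :=
      hu.exists_upper_disclosure hf ⟨hL, hmean.1.le.trans hH⟩ ⟨ha'.2, hb⟩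
    refine (add_le_add_right hle' _).trans ?_
    rw [← add_assoc]
    exact hu.middleDisclosurePayoff_le_of_isMaxOn hf hno hz hL hb'.1 hb'.2

theorem right_lt_condMean_of_isMaxOn (hu : IsConcaveConvexConcave u u' θL θH)
    (hf : IsDensity f) (hno : ¬HasTangentPair f u u' θL θH) (hz : z ∈ Ioo (0 : ℝ) 1)
    (hmax : IsMaxOn (splitPayoff f u) (Icc 0 1) z) : θH < condMean f z 1 := by
  have hz₁ := Ioo_subset_Icc_self hz
  by_contra! hle
  rcases lt_or_ge z θL with hzL | hzL
  · have hlt := hu.pooledPayoff_add_lt_of_tangentLine_eq hf ⟨hz.1, hzL⟩ ⟨hz.2, le_rfl⟩ hle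
      (hu.tangentLine_eq_of_isMaxOn hf unitInterval.one_mem hz hmax)
    have hmerge : splitPayoff f u 1 ≤ splitPayoff f u z := hmax unitInterval.one_mem
    rw [splitPayoff, pooledPayoff_self, add_zero] at hmerge
    exact hlt.not_ge hmerge
  · have hmean := hf.condMean_mem_Ioo hz₁ unitInterval.one_mem hz.2
    have hd := hu.hasDerivAt _ (hf.condMean_mem_Icc hz₁ unitInterval.one_mem)
    have htangent := tangentLine_lt_of_strictConvexOn hu.strictConvexOn_middle hd
      ⟨hzL.trans hmean.1.le, hle⟩ ⟨hzL, hmean.1.le.trans hle⟩ hmean.1.ne'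
    have hslope := hf.massDeriv_nonpos hz₁ hu.right_mem_Icc (hmean.1.trans_le hle)
      ((hf.hasMassDerivAt_disclosedPayoff_right hu.continuousOn hz₁ hz).add
        (hf.hasMassDerivAt_pooledPayoff_left unitInterval.one_mem hz hz.2.ne' hd))
      fun b hb => by
        have := hu.middleDisclosurePayoff_le_of_isMaxOn hf hno hmax hzL hb.1 hb.2
        rw [middleDisclosurePayoff, splitPayoff] at this
        rw [mem_ofPred_eq, disclosedPayoff_self]
        linarith
    linarith

theorem hasTangentPair_of_reflect (hu : IsConcaveConvexConcave u u' θL θH) (hf : IsDensity f)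
    (h : HasTangentPair (fun t => f (1 - t)) (fun t => u (1 - t)) (fun t => -u' (1 - t))
      (1 - θH) (1 - θL)) : HasTangentPair f u u' θL θH := by
  obtain ⟨a, ha, b, hb, hab, hta, htb⟩ := h
  have hsub : Ioo (1 - θH) (1 - θL) ⊆ Ioo (0 : ℝ) 1 :=
    Ioo_subset_Ioo hu.reflect.left_pos.le hu.reflect.right_lt_one.le
  rw [tangentLine_reflect, hf.condMean_reflect unitInterval.zero_mem
    (Ioo_subset_Icc_self (hsub ha)) (hsub ha).1.ne, sub_sub_cancel, sub_zero] at hta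
  rw [tangentLine_reflect, hf.condMean_reflect (Ioo_subset_Icc_self (hsub hb))
    unitInterval.one_mem (hsub hb).2.ne, sub_sub_cancel, sub_self] at htb
  exact ⟨1 - b, ⟨by linarith [hb.2], by linarith [hb.1]⟩, 1 - a,
    ⟨by linarith [ha.2], by linarith [ha.1]⟩, by linarith, htb, hta⟩

theorem condMean_lt_left_of_isMaxOn (hu : IsConcaveConvexConcave u u' θL θH)
    (hf : IsDensity f) (hno : ¬HasTangentPair f u u' θL θH) (hz : z ∈ Ioo (0 : ℝ) 1)
    (hmax : IsMaxOn (splitPayoff f u) (Icc 0 1) z) : condMean f 0 z < θL := by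
  have hz₁ : 1 - z ∈ Ioo (0 : ℝ) 1 := Ioo.mem_iff_one_sub_mem.1 hz
  have hmax' : IsMaxOn (splitPayoff (fun t => f (1 - t)) fun t => u (1 - t)) (Icc 0 1) (1 - z) := by
    intro t ht
    rw [mem_ofPred_eq, hf.splitPayoff_reflect ht,
      hf.splitPayoff_reflect (Ioo_subset_Icc_self hz₁), sub_sub_cancel]
    exact hmax (Icc.mem_iff_one_sub_mem.1 ht)
  have hlt := hu.reflect.right_lt_condMean_of_isMaxOn hf.reflect
    (mt (hu.hasTangentPair_of_reflect hf) hno) hz₁ hmax'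
  rw [hf.condMean_reflect (Ioo_subset_Icc_self hz₁) unitInterval.one_mem hz₁.2.ne, sub_self,
    sub_sub_cancel] at hlt
  linarith

end IsConcaveConvexConcave

section Components

theorem setIntegral_nonneg_of_connectedComponentIn {X : Type*} [TopologicalSpace X]
    [LocallyConnectedSpace X] [TopologicalSpace.SeparableSpace X] [MeasurableSpace X]
    [OpensMeasurableSpace X] {μ : Measure X} {O : Set X} {k : X → ℝ} (hO : IsOpen O)
    (hk : IntegrableOn k O μ)
    (hcomp : ∀ x ∈ O, 0 ≤ ∫ t in connectedComponentIn O x, k t ∂μ) : 0 ≤ ∫ t in O, k t ∂μ := by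
  set 𝒞 : Set (Set X) := connectedComponentIn O '' O
  have hopen : ∀ s ∈ 𝒞, IsOpen s := forall_mem_image.2 fun _ _ => hO.connectedComponentIn
  have hdisj : 𝒞.PairwiseDisjoint id := by
    rintro _ ⟨x, -, rfl⟩ _ ⟨y, -, rfl⟩ hne
    refine disjoint_left.2 fun t htx hty => hne ?_
    rw [connectedComponentIn_eq htx, connectedComponentIn_eq hty]
  have : Countable 𝒞 := (hdisj.countable_of_isOpen hopen
    (forall_mem_image.2 fun _ hx => ⟨_, mem_connectedComponentIn hx⟩)).to_subtype
  have hunion : ⋃ s : 𝒞, (s : Set X) = O := by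
    rw [← sUnion_eq_iUnion]
    exact (sUnion_subset (forall_mem_image.2 fun x _ => connectedComponentIn_subset O x)).antisymm
      fun x hx => ⟨_, mem_image_of_mem _ hx, mem_connectedComponentIn hx⟩
  rw [← hunion, integral_iUnion (s := fun s : 𝒞 => (s : Set X))
    (fun s => (hopen s s.2).measurableSet)
    (fun s t hst => hdisj s.2 t.2 (Subtype.coe_injective.ne hst)) (hunion.symm ▸ hk)]
  refine tsum_nonneg ?_
  rintro ⟨_, x, hx, rfl⟩
  exact hcomp x hx

variable {Q : Set ℝ} {p q x y : ℝ}

theorem compInf_lt (hQ : BddBelow Q) (hx : x ∈ interior Q) : compInf Q x < x := by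
  obtain ⟨l, r, hlr, hsub⟩ := mem_nhds_iff_exists_Ioo_subset.1
    (connectedComponentIn_mem_nhds (mem_interior_iff_mem_nhds.1 hx))
  obtain ⟨y, hly, hyx⟩ := exists_between hlr.1
  exact (csInf_le (hQ.mono (connectedComponentIn_subset Q x))
    (hsub ⟨hly, hyx.trans hlr.2⟩)).trans_lt hyx

theorem lt_compSup (hQ : BddAbove Q) (hx : x ∈ interior Q) : x < compSup Q x := by
  obtain ⟨l, r, hlr, hsub⟩ := mem_nhds_iff_exists_Ioo_subset.1
    (connectedComponentIn_mem_nhds (mem_interior_iff_mem_nhds.1 hx))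
  obtain ⟨y, hxy, hyr⟩ := exists_between hlr.2
  exact hxy.trans_le (le_csSup (hQ.mono (connectedComponentIn_subset Q x))
    (hsub ⟨hlr.1.trans hxy, hyr⟩))

theorem compInf_notMem_interior (hQ : BddBelow Q) (hx : x ∈ Q) : compInf Q x ∉ interior Q := by
  intro h
  have hclosure : compInf Q x ∈ closure (connectedComponentIn Q x) :=
    csInf_mem_closure ⟨x, mem_connectedComponentIn hx⟩
      (hQ.mono (connectedComponentIn_subset Q x))
  obtain ⟨y, hy, hyx⟩ := mem_closure_iff_nhds.1 hclosure _
    (connectedComponentIn_mem_nhds (mem_interior_iff_mem_nhds.1 h))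
  have hsame : connectedComponentIn Q (compInf Q x) = connectedComponentIn Q x :=
    (connectedComponentIn_eq hy).trans (connectedComponentIn_eq hyx).symm
  exact (compInf_lt hQ h).ne (congrArg sInf hsame)

theorem compSup_notMem_interior (hQ : BddAbove Q) (hx : x ∈ Q) : compSup Q x ∉ interior Q := by
  intro h
  have hclosure : compSup Q x ∈ closure (connectedComponentIn Q x) :=
    csSup_mem_closure ⟨x, mem_connectedComponentIn hx⟩
      (hQ.mono (connectedComponentIn_subset Q x))
  obtain ⟨y, hy, hyx⟩ := mem_closure_iff_nhds.1 hclosure _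
    (connectedComponentIn_mem_nhds (mem_interior_iff_mem_nhds.1 h))
  have hsame : connectedComponentIn Q (compSup Q x) = connectedComponentIn Q x :=
    (connectedComponentIn_eq hy).trans (connectedComponentIn_eq hyx).symm
  exact (lt_compSup hQ h).ne' (congrArg sSup hsame)

variable (hbelow : BddBelow Q) (habove : BddAbove Q)
include hbelow habove

theorem Ioo_compInf_compSup_subset_connectedComponentIn (hx : x ∈ Q) :
    Ioo (compInf Q x) (compSup Q x) ⊆ connectedComponentIn Q x :=
  (isConnected_connectedComponentIn_iff.2 hx).Ioo_csInf_csSup_subset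
    (hbelow.mono (connectedComponentIn_subset Q x)) (habove.mono (connectedComponentIn_subset Q x))

theorem Ioo_compInf_compSup_subset_interior (hx : x ∈ Q) :
    Ioo (compInf Q x) (compSup Q x) ⊆ interior Q :=
  interior_maximal ((Ioo_compInf_compSup_subset_connectedComponentIn hbelow habove hx).trans
    (connectedComponentIn_subset Q x)) isOpen_Ioo

theorem le_compInf (hp : p ∉ interior Q) (hx : x ∈ interior Q) (hpx : p ≤ x) :
    p ≤ compInf Q x :=
  not_lt.1 fun h => hp <| Ioo_compInf_compSup_subset_interior hbelow habove (interior_subset hx)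
    ⟨h, hpx.trans_lt (lt_compSup habove hx)⟩

theorem compSup_le (hp : p ∉ interior Q) (hx : x ∈ interior Q) (hxp : x ≤ p) :
    compSup Q x ≤ p :=
  not_lt.1 fun h => hp <| Ioo_compInf_compSup_subset_interior hbelow habove (interior_subset hx)
    ⟨(compInf_lt hbelow hx).trans_le hxp, h⟩

theorem compInf_eq (hp : p ∉ interior Q) (hsub : Ioo p q ⊆ interior Q) (hx : x ∈ Ioo p q) :
    compInf Q x = p :=
  (le_compInf hbelow habove hp (hsub hx) hx.1.le).eq_or_lt'.resolve_right fun h =>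
    compInf_notMem_interior hbelow (interior_subset (hsub hx))
      (hsub ⟨h, (compInf_lt hbelow (hsub hx)).trans hx.2⟩)

theorem compSup_eq (hq : q ∉ interior Q) (hsub : Ioo p q ⊆ interior Q) (hx : x ∈ Ioo p q) :
    compSup Q x = q :=
  (compSup_le hbelow habove hq (hsub hx) hx.2.le).eq_or_lt.resolve_right fun h =>
    compSup_notMem_interior habove (interior_subset (hsub hx))
      (hsub ⟨hx.1.trans (lt_compSup habove (hsub hx)), h⟩)

theorem connectedComponentIn_interior_inter_Ioo (hp : p ∉ interior Q) (hq : q ∉ interior Q)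
    (hx : x ∈ interior Q ∩ Ioo p q) :
    connectedComponentIn (interior Q ∩ Ioo p q) x = Ioo (compInf Q x) (compSup Q x) := by
  refine Subset.antisymm (fun y hy => ?_) ?_
  · have hyQ : y ∈ connectedComponentIn Q x :=
      connectedComponentIn_mono x (inter_subset_left.trans interior_subset) hy
    have hyint : y ∈ interior Q := (connectedComponentIn_subset _ x hy).1
    have hsub := connectedComponentIn_subset Q x
    exact ⟨(csInf_le (hbelow.mono hsub) hyQ).lt_of_ne fun h =>
        compInf_notMem_interior hbelow (interior_subset hx.1) (h.symm ▸ hyint : sInf _ ∈ _),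
      (le_csSup (habove.mono hsub) hyQ).lt_of_ne fun h =>
        compSup_notMem_interior habove (interior_subset hx.1) (h ▸ hyint : sSup _ ∈ _)⟩
  · have hsub := Ioo_compInf_compSup_subset_interior hbelow habove (interior_subset hx.1)
    refine isPreconnected_Ioo.subset_connectedComponentIn
      ⟨compInf_lt hbelow hx.1, lt_compSup habove hx.1⟩ (subset_inter hsub (Ioo_subset_Ioo ?_ ?_))
    · exact le_compInf hbelow habove hp hx.1 hx.2.1.le
    · exact compSup_le hbelow habove hq hx.1 hx.2.2.le

theorem intervalIntegral_nonneg_of_components {k : ℝ → ℝ} (hp : p ∉ interior Q)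
    (hq : q ∉ interior Q) (hpq : p ≤ q) (hk : IntervalIntegrable k volume p q)
    (hoff : ∀ t ∈ Ioo p q, t ∉ interior Q → 0 ≤ k t)
    (hcomp : ∀ x ∈ Ioo p q, x ∈ interior Q → 0 ≤ ∫ t in (compInf Q x)..(compSup Q x), k t) :
    0 ≤ ∫ t in p..q, k t := by
  rw [intervalIntegrable_iff_integrableOn_Ioo_of_le hpq] at hk
  rw [intervalIntegral.integral_of_le hpq, integral_Ioc_eq_integral_Ioo,
    ← integral_inter_add_sdiff isOpen_interior.measurableSet hk, inter_comm]
  refine add_nonneg (setIntegral_nonneg_of_connectedComponentIn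
    (isOpen_interior.inter isOpen_Ioo) (hk.mono_set inter_subset_right) fun x hx => ?_)
    (setIntegral_nonneg (measurableSet_Ioo.diff isOpen_interior.measurableSet)
      fun t ht => hoff t ht.1 ht.2)
  rw [connectedComponentIn_interior_inter_Ioo hbelow habove hp hq hx,
    ← integral_Ioc_eq_integral_Ioo, ← intervalIntegral.integral_of_le
      ((compInf_lt hbelow hx.1).trans (lt_compSup habove hx.1)).le]
  exact hcomp x hx.2 hx.1

theorem intervalIntegral_mono_of_components {g k : ℝ → ℝ} (hp : p ∉ interior Q)
    (hq : q ∉ interior Q) (hpq : p ≤ q) (hg : IntervalIntegrable g volume p q)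
    (hk : IntervalIntegrable k volume p q)
    (hoff : ∀ t ∈ Ioo p q, t ∉ interior Q → g t ≤ k t)
    (hcomp : ∀ x ∈ Ioo p q, x ∈ interior Q →
      ∫ t in (compInf Q x)..(compSup Q x), g t ≤ ∫ t in (compInf Q x)..(compSup Q x), k t) :
    ∫ t in p..q, g t ≤ ∫ t in p..q, k t := by
  rw [← sub_nonneg, ← intervalIntegral.integral_sub hk hg]
  refine intervalIntegral_nonneg_of_components hbelow habove hp hq hpq (hk.sub hg)
    (fun t ht htQ => sub_nonneg.2 (hoff t ht htQ)) fun x hx hxQ => ?_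
  have hsub : uIcc (compInf Q x) (compSup Q x) ⊆ uIcc p q := by
    rw [uIcc_of_le hpq]
    refine uIcc_subset_Icc ⟨le_compInf hbelow habove hp hxQ hx.1.le, ?_⟩
      ⟨?_, compSup_le hbelow habove hq hxQ hx.2.le⟩
    · exact (compInf_lt hbelow hxQ).le.trans hx.2.le
    · exact hx.1.le.trans (lt_compSup habove hxQ).le
  rw [intervalIntegral.integral_sub (hk.mono_set hsub) (hg.mono_set hsub)]
  exact sub_nonneg.2 (hcomp x hx hxQ)

end Components

namespace IsPoolingSet

section Components

variable {Q : Set ℝ} {x : ℝ} (hQ : IsPoolingSet Q)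
include hQ

theorem subset_Icc : Q ⊆ Icc 0 1 := by
  obtain ⟨U, -, rfl⟩ := hQ
  exact inter_subset_right

theorem bddBelow : BddBelow Q := bddBelow_Icc.mono hQ.subset_Icc

theorem bddAbove : BddAbove Q := bddAbove_Icc.mono hQ.subset_Icc

theorem interior_subset_Ioo : interior Q ⊆ Ioo 0 1 :=
  interior_Icc (a := (0 : ℝ)) ▸ interior_mono hQ.subset_Icc

theorem zero_notMem_interior : (0 : ℝ) ∉ interior Q :=
  fun h => (hQ.interior_subset_Ioo h).1.false

theorem one_notMem_interior : (1 : ℝ) ∉ interior Q :=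
  fun h => (hQ.interior_subset_Ioo h).2.false

theorem mem_interior (hx : x ∈ Q) (hx₁ : x ∈ Ioo (0 : ℝ) 1) : x ∈ interior Q := by
  obtain ⟨U, hU, rfl⟩ := hQ
  exact interior_maximal (inter_subset_inter_right U Ioo_subset_Icc_self) (hU.inter isOpen_Ioo)
    ⟨hx.1, hx₁⟩

theorem compInf_mem_Icc (hx : x ∈ interior Q) : compInf Q x ∈ Icc (0 : ℝ) 1 := by
  have hx₁ := hQ.interior_subset_Ioo hx
  exact ⟨le_compInf hQ.bddBelow hQ.bddAbove hQ.zero_notMem_interior hx hx₁.1.le,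
    (compInf_lt hQ.bddBelow hx).le.trans hx₁.2.le⟩

theorem compSup_mem_Icc (hx : x ∈ interior Q) : compSup Q x ∈ Icc (0 : ℝ) 1 := by
  have hx₁ := hQ.interior_subset_Ioo hx
  exact ⟨hx₁.1.le.trans (lt_compSup hQ.bddAbove hx).le,
    compSup_le hQ.bddBelow hQ.bddAbove hQ.one_notMem_interior hx hx₁.2.le⟩

end Components

section PoolMean

variable {f g : ℝ → ℝ} {Q : Set ℝ} {p q x y : ℝ}

theorem poolMean_of_notMem_interior (hQ : IsPoolingSet Q) (hx : x ∉ interior Q)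
    (hx₁ : x ∈ Ioo (0 : ℝ) 1) : poolMean f Q x = x :=
  if_neg fun h => hx (hQ.mem_interior h hx₁)

theorem poolMean_of_Ioo_subset (hQ : IsPoolingSet Q) (hp : p ∉ interior Q) (hq : q ∉ interior Q)
    (hsub : Ioo p q ⊆ interior Q) (hx : x ∈ Ioo p q) : poolMean f Q x = condMean f p q := by
  rw [poolMean, if_pos (interior_subset (hsub hx)), compInf_eq hQ.bddBelow hQ.bddAbove hp hsub hx,
    compSup_eq hQ.bddBelow hQ.bddAbove hq hsub hx]

theorem poolMean_of_mem_component (hQ : IsPoolingSet Q) (hx : x ∈ interior Q)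
    (hy : y ∈ Ioo (compInf Q x) (compSup Q x)) :
    poolMean f Q y = condMean f (compInf Q x) (compSup Q x) :=
  hQ.poolMean_of_Ioo_subset (compInf_notMem_interior hQ.bddBelow (interior_subset hx))
    (compSup_notMem_interior hQ.bddAbove (interior_subset hx))
    (Ioo_compInf_compSup_subset_interior hQ.bddBelow hQ.bddAbove (interior_subset hx)) hy

theorem poolMean_eq (hQ : IsPoolingSet Q) (hx : x ∈ interior Q) :
    poolMean f Q x = condMean f (compInf Q x) (compSup Q x) :=
  hQ.poolMean_of_mem_component hx ⟨compInf_lt hQ.bddBelow hx, lt_compSup hQ.bddAbove hx⟩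

theorem condMean_mem_component (hQ : IsPoolingSet Q) (hf : IsDensity f) (hx : x ∈ interior Q) :
    condMean f (compInf Q x) (compSup Q x) ∈ Ioo (compInf Q x) (compSup Q x) :=
  hf.condMean_mem_Ioo (hQ.compInf_mem_Icc hx) (hQ.compSup_mem_Icc hx)
    ((compInf_lt hQ.bddBelow hx).trans (lt_compSup hQ.bddAbove hx))

theorem le_poolMean (hQ : IsPoolingSet Q) (hf : IsDensity f) (hp : p ∉ interior Q)
    (hpx : p ≤ x) (hx : x ∈ Ioo (0 : ℝ) 1) : p ≤ poolMean f Q x := by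
  by_cases hxQ : x ∈ interior Q
  · rw [hQ.poolMean_eq hxQ]
    exact (le_compInf hQ.bddBelow hQ.bddAbove hp hxQ hpx).trans
      (hQ.condMean_mem_component hf hxQ).1.le
  · rwa [hQ.poolMean_of_notMem_interior hxQ hx]

theorem poolMean_le (hQ : IsPoolingSet Q) (hf : IsDensity f) (hp : p ∉ interior Q)
    (hxp : x ≤ p) (hx : x ∈ Ioo (0 : ℝ) 1) : poolMean f Q x ≤ p := by
  by_cases hxQ : x ∈ interior Q
  · rw [hQ.poolMean_eq hxQ]
    exact (hQ.condMean_mem_component hf hxQ).2.le.trans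
      (compSup_le hQ.bddBelow hQ.bddAbove hp hxQ hxp)
  · rwa [hQ.poolMean_of_notMem_interior hxQ hx]

theorem poolMean_mem_Icc (hQ : IsPoolingSet Q) (hf : IsDensity f) (hx : x ∈ Ioo (0 : ℝ) 1) :
    poolMean f Q x ∈ Icc (0 : ℝ) 1 :=
  ⟨hQ.le_poolMean hf hQ.zero_notMem_interior hx.1.le hx,
    hQ.poolMean_le hf hQ.one_notMem_interior hx.2.le hx⟩

theorem monotoneOn_poolMean (hQ : IsPoolingSet Q) (hf : IsDensity f) :
    MonotoneOn (poolMean f Q) (Ioo 0 1) := by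
  intro x hx y hy hxy
  by_cases hxQ : x ∈ interior Q
  · have hcut := compSup_notMem_interior hQ.bddAbove (interior_subset hxQ)
    rcases lt_or_ge y (compSup Q x) with hyx | hyx
    · rw [hQ.poolMean_eq hxQ, hQ.poolMean_of_mem_component hxQ
        ⟨(compInf_lt hQ.bddBelow hxQ).trans_le hxy, hyx⟩]
    · exact (hQ.poolMean_le hf hcut (lt_compSup hQ.bddAbove hxQ).le hx).trans
        (hQ.le_poolMean hf hcut hyx hy)
  · rw [hQ.poolMean_of_notMem_interior hxQ hx]
    exact hQ.le_poolMean hf hxQ hxy hy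

theorem intervalIntegrable_comp_poolMean (hQ : IsPoolingSet Q) (hf : IsDensity f)
    (hg : ContinuousOn g (Icc 0 1)) (hx : x ∈ Icc (0 : ℝ) 1) (hy : y ∈ Icc (0 : ℝ) 1) :
    IntervalIntegrable (fun t => g (poolMean f Q t) * f t) volume x y := by
  obtain ⟨K, hK⟩ := isCompact_Icc.exists_bound_of_continuousOn hg
  have hext : Continuous fun s => g (projIcc 0 1 (zero_le_one' ℝ) s) :=
    (continuousOn_iff_continuous_domRestrict.1 hg).comp continuous_projIcc
  have hmeas : AEStronglyMeasurable (fun t => g (poolMean f Q t)) (volume.restrict (Ioo 0 1)) := by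
    refine (hext.measurable.comp_aemeasurable (aemeasurable_restrict_of_monotoneOn
      measurableSet_Ioo (hQ.monotoneOn_poolMean hf))).aestronglyMeasurable.congr ?_
    filter_upwards [ae_restrict_mem measurableSet_Ioo] with t ht
    simp [projIcc_of_mem _ (hQ.poolMean_mem_Icc hf ht)]
  have hgf : IntervalIntegrable (fun t => g (poolMean f Q t) * f t) volume 0 1 := by
    rw [intervalIntegrable_iff_integrableOn_Ioo_of_le zero_le_one]
    refine Integrable.bdd_mul (c := K) (hf.2.1.mono_set Ioo_subset_Icc_self) hmeas ?_
    filter_upwards [ae_restrict_mem measurableSet_Ioo] with t ht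
    exact hK _ (hQ.poolMean_mem_Icc hf ht)
  exact hgf.mono_set (uIcc_of_le (zero_le_one' ℝ) ▸ uIcc_subset_Icc hx hy)

theorem integral_comp_poolMean_of_Ioo_subset (hQ : IsPoolingSet Q) (f g : ℝ → ℝ)
    (hp : p ∉ interior Q) (hq : q ∉ interior Q) (hpq : p ≤ q) (hsub : Ioo p q ⊆ interior Q) :
    ∫ t in p..q, g (poolMean f Q t) * f t = pooledPayoff f g p q := by
  rw [pooledPayoff, mul_comm, ← intervalIntegral.integral_const_mul]
  refine intervalIntegral.integral_congr_Ioo_of_le hpq fun t ht => ?_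
  simp only [hQ.poolMean_of_Ioo_subset hp hq hsub ht]

theorem integral_comp_poolMean_component (hQ : IsPoolingSet Q) (f g : ℝ → ℝ)
    (hx : x ∈ interior Q) :
    ∫ t in (compInf Q x)..(compSup Q x), g (poolMean f Q t) * f t
      = pooledPayoff f g (compInf Q x) (compSup Q x) :=
  hQ.integral_comp_poolMean_of_Ioo_subset f g
    (compInf_notMem_interior hQ.bddBelow (interior_subset hx))
    (compSup_notMem_interior hQ.bddAbove (interior_subset hx))
    ((compInf_lt hQ.bddBelow hx).trans (lt_compSup hQ.bddAbove hx)).le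
    (Ioo_compInf_compSup_subset_interior hQ.bddBelow hQ.bddAbove (interior_subset hx))

theorem integral_comp_poolMean_le (hQ : IsPoolingSet Q) (hf : IsDensity f)
    (hg : ContinuousOn g (Icc 0 1)) (hp : p ∈ Icc 0 1 \ interior Q)
    (hq : q ∈ Icc 0 1 \ interior Q) (hpq : p ≤ q) (hconv : ConvexOn ℝ (Icc p q) g) :
    ∫ t in p..q, g (poolMean f Q t) * f t ≤ disclosedPayoff f g p q := by
  refine intervalIntegral_mono_of_components hQ.bddBelow hQ.bddAbove hp.2 hq.2 hpq
    (hQ.intervalIntegrable_comp_poolMean hf hg hp.1 hq.1)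
    (hf.intervalIntegrable_mul hg hp.1 hq.1) (fun t ht htQ => ?_) fun x hx hxQ => ?_
  · rw [hQ.poolMean_of_notMem_interior htQ (Ioo_subset_Ioo hp.1.1 hq.1.2 ht)]
  · have hinf := hQ.compInf_mem_Icc hxQ
    have hsup := hQ.compSup_mem_Icc hxQ
    have hsub : Icc (compInf Q x) (compSup Q x) ⊆ Icc p q :=
      Icc_subset_Icc (le_compInf hQ.bddBelow hQ.bddAbove hp.2 hxQ hx.1.le)
        (compSup_le hQ.bddBelow hQ.bddAbove hq.2 hxQ hx.2.le)
    rw [hQ.integral_comp_poolMean_component f g hxQ]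
    exact pooledPayoff_le_disclosedPayoff
      ((compInf_lt hQ.bddBelow hxQ).trans (lt_compSup hQ.bddAbove hxQ))
      (hf.intervalIntegrable hinf hsup) (hf.pos_of_mem_Ioo hinf hsup)
      (hconv.subset hsub (convex_Icc _ _)) (hf.intervalIntegrable_mul hg hinf hsup)

theorem integral_poolMean (hQ : IsPoolingSet Q) (hf : IsDensity f)
    (hp : p ∈ Icc 0 1 \ interior Q) (hq : q ∈ Icc 0 1 \ interior Q) (hpq : p ≤ q) :
    ∫ t in p..q, poolMean f Q t * f t = ∫ t in p..q, t * f t := by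
  refine le_antisymm (hQ.integral_comp_poolMean_le (g := id) hf continuousOn_id hp hq hpq
    (convexOn_id (convex_Icc p q))) ?_
  have hneg := hQ.integral_comp_poolMean_le (g := fun t => -t) hf continuousOn_neg hp hq hpq
    (concaveOn_id (convex_Icc p q)).neg
  simpa only [disclosedPayoff, neg_mul, intervalIntegral.integral_neg, neg_le_neg_iff] using hneg

theorem integral_comp_poolMean_le_pooledPayoff (hQ : IsPoolingSet Q) (hf : IsDensity f)
    (hg : ContinuousOn g (Icc 0 1)) (hp : p ∈ Icc 0 1 \ interior Q)
    (hq : q ∈ Icc 0 1 \ interior Q) (hpq : p ≤ q) (hconc : ConcaveOn ℝ (Icc p q) g) :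
    ∫ t in p..q, g (poolMean f Q t) * f t ≤ pooledPayoff f g p q := by
  rcases hpq.eq_or_lt with rfl | hlt
  · simp
  have hmem : ∀ t ∈ Ioo p q, poolMean f Q t ∈ Icc p q := fun t ht =>
    have ht₁ := Ioo_subset_Ioo hp.1.1 hq.1.2 ht
    ⟨hQ.le_poolMean hf hp.2 ht.1.le ht₁, hQ.poolMean_le hf hq.2 ht.2.le ht₁⟩
  have hneg := pooledPayoff_le_integral_comp hlt (hf.intervalIntegrable hp.1 hq.1)
    (hf.pos_of_mem_Ioo hp.1 hq.1) hconc.neg hmem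
    (hQ.intervalIntegrable_comp_poolMean hf continuousOn_id hp.1 hq.1)
    (hQ.intervalIntegrable_comp_poolMean hf hg.neg hp.1 hq.1)
    (hQ.integral_poolMean hf hp hq hpq)
  simpa only [pooledPayoff, Pi.neg_apply, neg_mul, mul_neg, intervalIntegral.integral_neg,
    neg_le_neg_iff] using hneg

end PoolMean

end IsPoolingSet

theorem IsPoolingSet.exists_surrounding_cuts {Q : Set ℝ} {t : ℝ} (hQ : IsPoolingSet Q)
    (ht : t ∈ Icc (0 : ℝ) 1) : ∃ a ∈ Icc 0 1 \ interior Q, ∃ c ∈ Icc 0 1 \ interior Q,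
      t ∈ Icc a c ∧ Ioo a c ⊆ interior Q := by
  by_cases htQ : t ∈ interior Q
  · have htQ' := interior_subset htQ
    exact ⟨compInf Q t, ⟨hQ.compInf_mem_Icc htQ, compInf_notMem_interior hQ.bddBelow htQ'⟩,
      compSup Q t, ⟨hQ.compSup_mem_Icc htQ, compSup_notMem_interior hQ.bddAbove htQ'⟩,
      ⟨(compInf_lt hQ.bddBelow htQ).le, (lt_compSup hQ.bddAbove htQ).le⟩,
      Ioo_compInf_compSup_subset_interior hQ.bddBelow hQ.bddAbove htQ'⟩
  · exact ⟨t, ⟨ht, htQ⟩, t, ⟨ht, htQ⟩, ⟨le_rfl, le_rfl⟩, by simp⟩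

section SplitPoolingSet

variable {f u : ℝ → ℝ} {z : ℝ}

theorem isPoolingSet_split (hz : z ∈ Ioo (0 : ℝ) 1) : IsPoolingSet (Ico 0 z ∪ Ioc z 1) := by
  refine ⟨{z}ᶜ, isOpen_compl_singleton, ?_⟩
  ext t
  simp only [mem_union, mem_Ico, mem_Ioc, mem_inter_iff, mem_compl_iff, mem_singleton_iff, mem_Icc]
  grind

theorem notMem_interior_split (z : ℝ) : z ∉ interior (Ico 0 z ∪ Ioc z 1) :=
  fun h => by simpa using interior_subset h

theorem IsDensity.poolValue_split (hf : IsDensity f) (hu : ContinuousOn u (Icc 0 1))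
    (hz : z ∈ Ioo (0 : ℝ) 1) : poolValue f u (Ico 0 z ∪ Ioc z 1) = splitPayoff f u z := by
  have hQ := isPoolingSet_split hz
  have hz₁ := Ioo_subset_Icc_self hz
  have hleft : Ioo 0 z ⊆ interior (Ico 0 z ∪ Ioc z 1) :=
    interior_maximal (Ioo_subset_Ico_self.trans subset_union_left) isOpen_Ioo
  have hright : Ioo z 1 ⊆ interior (Ico 0 z ∪ Ioc z 1) :=
    interior_maximal (Ioo_subset_Ioc_self.trans subset_union_right) isOpen_Ioo
  rw [splitPayoff, poolValue,
    ← hQ.integral_comp_poolMean_of_Ioo_subset f u hQ.zero_notMem_interior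
      (notMem_interior_split z) hz.1.le hleft,
    ← hQ.integral_comp_poolMean_of_Ioo_subset f u (notMem_interior_split z)
      hQ.one_notMem_interior hz.2.le hright]
  exact (intervalIntegral.integral_add_adjacent_intervals
    (hQ.intervalIntegrable_comp_poolMean hf hu unitInterval.zero_mem hz₁)
    (hQ.intervalIntegrable_comp_poolMean hf hu hz₁ unitInterval.one_mem)).symm

theorem IsDensity.pooledPayoff_zero_one (hf : IsDensity f) (u : ℝ → ℝ) :
    pooledPayoff f u 0 1 = u (∫ t in (0 : ℝ)..1, t * f t) := by
  simp [pooledPayoff, condMean, hf.2.2]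

theorem IsDensity.splitPayoff_eq_cdfF (hf : IsDensity f) (u : ℝ → ℝ) (hz : z ∈ Icc (0 : ℝ) 1) :
    splitPayoff f u z
      = u (condMean f 0 z) * cdfF f z + u (condMean f z 1) * (1 - cdfF f z) := by
  have hmass := hf.mass_add unitInterval.zero_mem hz unitInterval.one_mem
  rw [hf.2.2, ← eq_sub_iff_add_eq'] at hmass
  rw [splitPayoff, pooledPayoff, pooledPayoff, hmass, cdfF]
  ring

theorem IsDensity.continuousOn_splitPayoff (hf : IsDensity f) (hu : ContinuousOn u (Icc 0 1)) :
    ContinuousOn (splitPayoff f u) (Icc 0 1) :=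
  (hf.continuousOn_pooledPayoff_right hu unitInterval.zero_mem).add
    (hf.continuousOn_pooledPayoff_left hu unitInterval.one_mem)

theorem IsDensity.exists_isMaxOn_splitPayoff (hf : IsDensity f) (hu : ContinuousOn u (Icc 0 1))
    (hM : ∃ z ∈ Ioo (0 : ℝ) 1, pooledPayoff f u 0 1 ≤ splitPayoff f u z) :
    ∃ z ∈ Ioo (0 : ℝ) 1, IsMaxOn (splitPayoff f u) (Icc 0 1) z := by
  obtain ⟨w, hw, hle⟩ := hM
  obtain ⟨z, hz, hmax⟩ := isCompact_Icc.exists_isMaxOn ⟨0, unitInterval.zero_mem⟩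
    (hf.continuousOn_splitPayoff hu)
  rcases hz.1.eq_or_lt with rfl | hz₀
  · exact ⟨w, hw, fun t ht => (isMaxOn_iff.1 hmax t ht).trans (by simpa [splitPayoff] using hle)⟩
  rcases hz.2.eq_or_lt with rfl | hz₁
  · exact ⟨w, hw, fun t ht => (isMaxOn_iff.1 hmax t ht).trans (by simpa [splitPayoff] using hle)⟩
  · exact ⟨z, ⟨hz₀, hz₁⟩, hmax⟩

end SplitPoolingSet

namespace IsConcaveConvexConcave

variable {f u u' : ℝ → ℝ} {θL θH a b z : ℝ} {Q : Set ℝ}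

theorem poolValue_le_of_cuts (hu : IsConcaveConvexConcave u u' θL θH) (hf : IsDensity f)
    (hQ : IsPoolingSet Q) (ha : a ∈ Icc 0 1 \ interior Q) (haL : a ≤ θL)
    (hb : b ∈ Icc 0 1 \ interior Q) (hHb : θH ≤ b) :
    poolValue f u Q ≤ pooledPayoff f u 0 a + (∫ t in a..b, u (poolMean f Q t) * f t)
      + pooledPayoff f u b 1 := by
  have hui {x y : ℝ} (hx : x ∈ Icc (0 : ℝ) 1) (hy : y ∈ Icc (0 : ℝ) 1) :=
    hQ.intervalIntegrable_comp_poolMean hf hu.continuousOn hx hy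
  have hlow := hQ.integral_comp_poolMean_le_pooledPayoff hf hu.continuousOn
    ⟨unitInterval.zero_mem, hQ.zero_notMem_interior⟩ ha ha.1.1
    (hu.strictConcaveOn_left.concaveOn.subset (Icc_subset_Icc_right haL) (convex_Icc 0 a))
  have hhigh := hQ.integral_comp_poolMean_le_pooledPayoff hf hu.continuousOn hb
    ⟨unitInterval.one_mem, hQ.one_notMem_interior⟩ hb.1.2
    (hu.strictConcaveOn_right.concaveOn.subset (Icc_subset_Icc_left hHb) (convex_Icc b 1))
  rw [poolValue, ← intervalIntegral.integral_add_adjacent_intervals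
      (hui unitInterval.zero_mem hb.1) (hui hb.1 unitInterval.one_mem),
    ← intervalIntegral.integral_add_adjacent_intervals
      (hui unitInterval.zero_mem ha.1) (hui ha.1 hb.1)]
  exact add_le_add (add_le_add_left hlow _) hhigh

theorem exists_poolValue_le_middleDisclosurePayoff (hu : IsConcaveConvexConcave u u' θL θH)
    (hf : IsDensity f) (hQ : IsPoolingSet Q) {c d : ℝ} (ha : a ∈ Icc 0 1 \ interior Q)
    (hc : c ∈ Icc 0 1 \ interior Q) (hd : d ∈ Icc 0 1 \ interior Q)
    (hb : b ∈ Icc 0 1 \ interior Q) (hL : θL ∈ Icc a c) (hH : θH ∈ Icc d b) (hcd : c ≤ d)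
    (hac : Ioo a c ⊆ interior Q) (hdb : Ioo d b ⊆ interior Q) :
    ∃ a' b', θL ≤ a' ∧ a' ≤ b' ∧ b' ≤ θH ∧ poolValue f u Q ≤ middleDisclosurePayoff f u a' b' := by
  have hui {x y : ℝ} (hx : x ∈ Icc (0 : ℝ) 1) (hy : y ∈ Icc (0 : ℝ) 1) :=
    hQ.intervalIntegrable_comp_poolMean hf hu.continuousOn hx hy
  obtain ⟨a', ha', hlow⟩ := hu.exists_lower_disclosure hf ⟨ha.1.1, hL.1.trans hL.2⟩
    ⟨hL.2, hcd.trans hH.1⟩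
  obtain ⟨b', hb', hhigh⟩ := hu.exists_upper_disclosure hf ⟨hL.2.trans hcd, hH.1⟩
    ⟨hH.1.trans hH.2, hb.1.2⟩
  have ha₁ : a' ∈ Icc (0 : ℝ) 1 := ⟨hu.left_pos.le.trans ha'.1, ha'.2.trans hc.1.2⟩
  have hb₁ : b' ∈ Icc (0 : ℝ) 1 := ⟨hd.1.1.trans hb'.1, hb'.2.trans hu.right_lt_one.le⟩
  have hmiddle := hQ.integral_comp_poolMean_le hf hu.continuousOn hc hd hcd
    (hu.strictConvexOn_middle.convexOn.subset (Icc_subset_Icc hL.2 hH.1) (convex_Icc c d))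
  have hle := hu.poolValue_le_of_cuts hf hQ ha hL.1 hb hH.2
  rw [← intervalIntegral.integral_add_adjacent_intervals (hui ha.1 hd.1) (hui hd.1 hb.1),
    ← intervalIntegral.integral_add_adjacent_intervals (hui ha.1 hc.1) (hui hc.1 hd.1),
    hQ.integral_comp_poolMean_of_Ioo_subset f u ha.2 hc.2 (hL.1.trans hL.2) hac,
    hQ.integral_comp_poolMean_of_Ioo_subset f u hd.2 hb.2 (hH.1.trans hH.2) hdb] at hle
  refine ⟨a', b', ha'.1, ha'.2.trans (hcd.trans hb'.1), hb'.2, ?_⟩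
  rw [middleDisclosurePayoff, ← hf.disclosedPayoff_add hu.continuousOn ha₁ hd.1 hb₁,
    ← hf.disclosedPayoff_add hu.continuousOn ha₁ hc.1 hd.1]
  linarith

theorem poolValue_le_of_isMaxOn (hu : IsConcaveConvexConcave u u' θL θH) (hf : IsDensity f)
    (hno : ¬HasTangentPair f u u' θL θH) (hz : IsMaxOn (splitPayoff f u) (Icc 0 1) z)
    (hQ : IsPoolingSet Q) : poolValue f u Q ≤ splitPayoff f u z := by
  obtain ⟨a, ha, c, hc, hL, hac⟩ := hQ.exists_surrounding_cuts hu.left_mem_Icc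
  rcases le_or_gt θH c with hHc | hcH
  · have hle := hu.poolValue_le_of_cuts hf hQ ha hL.1 hc hHc
    rw [hQ.integral_comp_poolMean_of_Ioo_subset f u ha.2 hc.2 (hL.1.trans hL.2) hac] at hle
    exact hle.trans (hu.pooledPayoff_add_add_le_of_isMaxOn hf hno hz
      ⟨ha.1.1, hL.1.trans hL.2⟩ hc.1.2)
  · obtain ⟨d, hd, b, hb, hH, hdb⟩ := hQ.exists_surrounding_cuts hu.right_mem_Icc
    have hcd : c ≤ d := not_lt.1 fun hdc => hc.2 (hdb ⟨hdc, hcH.trans_le hH.2⟩)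
    obtain ⟨a', b', ha', hab, hb', hle⟩ := hu.exists_poolValue_le_middleDisclosurePayoff hf hQ
      ha hc hd hb hL hH hcd hac hdb
    exact hle.trans (hu.middleDisclosurePayoff_le_of_isMaxOn hf hno hz ha' hab hb')

end IsConcaveConvexConcave

namespace C1AC

variable {u u' u'' : ℝ → ℝ} {θL θH p q x y : ℝ}

theorem intervalIntegrable (hu : C1AC u u' u'') (hx : x ∈ Icc (0 : ℝ) 1)
    (hy : y ∈ Icc (0 : ℝ) 1) : IntervalIntegrable u'' volume x y :=
  ((intervalIntegrable_iff_integrableOn_Icc_of_le zero_le_one).2 hu.2.2.1).mono_set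
    (uIcc_of_le (zero_le_one' ℝ) ▸ uIcc_subset_Icc hx hy)

theorem integral_eq_sub (hu : C1AC u u' u'') (hx : x ∈ Icc (0 : ℝ) 1)
    (hy : y ∈ Icc (0 : ℝ) 1) : ∫ t in x..y, u'' t = u' y - u' x := by
  rw [hu.2.2.2 x hx, hu.2.2.2 y hy, add_sub_add_left_eq_sub,
    intervalIntegral.integral_interval_sub_left (hu.intervalIntegrable unitInterval.zero_mem hy)
      (hu.intervalIntegrable unitInterval.zero_mem hx)]

theorem strictMonoOn (hu : C1AC u u' u'') (hp : 0 ≤ p) (hq : q ≤ 1)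
    (hpos : ∀ t ∈ Ioo p q, 0 < u'' t) : StrictMonoOn u' (Icc p q) := by
  intro x hx y hy hxy
  have hx₁ := Icc_subset_Icc hp hq hx
  have hy₁ := Icc_subset_Icc hp hq hy
  rw [← sub_pos, ← hu.integral_eq_sub hx₁ hy₁]
  exact intervalIntegral.intervalIntegral_pos_of_pos_on (hu.intervalIntegrable hx₁ hy₁)
    (fun t ht => hpos t (Ioo_subset_Ioo hx.1 hy.2 ht)) hxy

theorem neg (hu : C1AC u u' u'') :
    C1AC (fun t => -u t) (fun t => -u' t) (fun t => -u'' t) := by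
  refine ⟨fun t ht => (hu.1 t ht).neg, hu.2.1.neg, hu.2.2.1.neg, fun t ht => ?_⟩
  simp only [hu.2.2.2 t ht, intervalIntegral.integral_neg, neg_add]

theorem strictConvexOn (hu : C1AC u u' u'') (hp : 0 ≤ p) (hq : q ≤ 1)
    (hpos : ∀ t ∈ Ioo p q, 0 < u'' t) : StrictConvexOn ℝ (Icc p q) u := by
  have hsub : Icc p q ⊆ Icc 0 1 := Icc_subset_Icc hp hq
  refine StrictMonoOn.strictConvexOn_of_deriv (convex_Icc p q)
    (fun t ht => (hu.1 t (hsub ht)).continuousAt.continuousWithinAt) ?_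
  exact ((hu.strictMonoOn hp hq hpos).mono interior_subset).congr
    fun t ht => (hu.1 t (hsub (interior_subset ht))).deriv.symm

theorem strictConcaveOn (hu : C1AC u u' u'') (hp : 0 ≤ p) (hq : q ≤ 1)
    (hneg : ∀ t ∈ Ioo p q, u'' t < 0) : StrictConcaveOn ℝ (Icc p q) u := by
  simpa only [Pi.neg_def, neg_neg] using
    (hu.neg.strictConvexOn hp hq fun t ht => neg_pos.2 (hneg t ht)).neg

theorem isConcaveConvexConcave (hu : C1AC u u' u'')
    (hθL : 0 < θL) (hθH : θH < 1) (hLH : θL < θH) (hneg1 : ∀ θ ∈ Ico 0 θL, u'' θ < 0)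
    (hpos : ∀ θ ∈ Ioo θL θH, 0 < u'' θ) (hneg2 : ∀ θ ∈ Ioc θH 1, u'' θ < 0) :
    IsConcaveConvexConcave u u' θL θH where
  left_pos := hθL
  left_lt_right := hLH
  right_lt_one := hθH
  hasDerivAt := hu.1
  strictConcaveOn_left := hu.strictConcaveOn le_rfl (hLH.trans hθH).le fun θ hθ =>
    hneg1 θ (Ioo_subset_Ico_self hθ)
  strictConvexOn_middle := hu.strictConvexOn hθL.le hθH.le hpos
  strictConcaveOn_right := hu.strictConcaveOn (hθL.trans hLH).le le_rfl fun θ hθ =>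
    hneg2 θ (Ioo_subset_Ioc_self hθ)

end C1AC

theorem split_pooling_optimal_general {f u u' : ℝ → ℝ} {θL θH : ℝ} (hf : IsDensity f)
    (hu : IsConcaveConvexConcave u u' θL θH) (hno : ¬HasTangentPair f u u' θL θH)
    (hM : ∃ z ∈ Ioo (0 : ℝ) 1, u (∫ t in (0 : ℝ)..1, t * f t) ≤
      u (condMean f 0 z) * cdfF f z + u (condMean f z 1) * (1 - cdfF f z)) :
    ∃ z ∈ Ioo (0 : ℝ) 1,
      tangentLine u u' (condMean f 0 z) z = tangentLine u u' (condMean f z 1) z ∧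
      u (∫ t in (0 : ℝ)..1, t * f t) ≤
        u (condMean f 0 z) * cdfF f z + u (condMean f z 1) * (1 - cdfF f z) ∧
      IsOptimal f u (Ico 0 z ∪ Ioc z 1) ∧
      condMean f 0 z ∈ Ioo 0 θL ∧ condMean f z 1 ∈ Ioo θH 1 := by
  obtain ⟨w, hw, hle⟩ := hM
  rw [← hf.splitPayoff_eq_cdfF u (Ioo_subset_Icc_self hw), ← hf.pooledPayoff_zero_one u] at hle
  obtain ⟨z, hz, hmax⟩ := hf.exists_isMaxOn_splitPayoff hu.continuousOn ⟨w, hw, hle⟩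
  have hz₁ := Ioo_subset_Icc_self hz
  refine ⟨z, hz, hu.tangentLine_eq_of_isMaxOn hf unitInterval.one_mem hz hmax, ?_,
    ⟨isPoolingSet_split hz, fun Q hQ => ?_⟩, ?_, ?_⟩
  · rw [← hf.splitPayoff_eq_cdfF u hz₁, ← hf.pooledPayoff_zero_one u]
    exact hle.trans (hmax (Ioo_subset_Icc_self hw))
  · exact (hu.poolValue_le_of_isMaxOn hf hno hmax hQ).trans_eq
      (hf.poolValue_split hu.continuousOn hz).symm
  · exact ⟨(hf.condMean_mem_Ioo unitInterval.zero_mem hz₁ hz.1).1,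
      hu.condMean_lt_left_of_isMaxOn hf hno hz hmax⟩
  · exact ⟨hu.right_lt_condMean_of_isMaxOn hf hno hz hmax,
      (hf.condMean_mem_Ioo hz₁ unitInterval.one_mem hz.2).2⟩

/-- two inflection points, no two-sided tangency pair exists; if
some `θ_*^M ∈ (0,1)` satisfies the common-tangent condition and dominates the
uninformed payoff, then for some such `θ_*^M` the pooling set
`[0,θ_*^M) ∪ (θ_*^M,1]` is optimal; moreover `m^L ∈ (0,θ^L)` and
`m^H ∈ (θ^H,1)` for this `θ_*^M`. -/
theorem split_pooling_optimal (f : ℝ → ℝ) (hf : IsDensity f)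
    (u u' u'' : ℝ → ℝ) (hu : C1AC u u' u'')
    (θL θH : ℝ) (hθL : θL ∈ Ioo (0:ℝ) 1) (hθH : θH ∈ Ioo (0:ℝ) 1) (hLH : θL < θH)
    (hneg1 : ∀ θ ∈ Ico (0:ℝ) θL, u'' θ < 0)
    (hpos : ∀ θ ∈ Ioo θL θH, 0 < u'' θ)
    (hneg2 : ∀ θ ∈ Ioc θH (1:ℝ), u'' θ < 0)
    (hnopair : ¬ ∃ x ∈ Ioo θL θH, ∃ y ∈ Ioo θL θH, x < y ∧
      u (condMean f 0 x) + u' (condMean f 0 x) * (x - condMean f 0 x) = u x ∧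
      u (condMean f y 1) + u' (condMean f y 1) * (y - condMean f y 1) = u y)
    (hM : ∃ z ∈ Ioo (0:ℝ) 1,
      u (condMean f 0 z) + u' (condMean f 0 z) * (z - condMean f 0 z)
        = u (condMean f z 1) + u' (condMean f z 1) * (z - condMean f z 1) ∧
      u (∫ t in (0:ℝ)..1, t * f t) ≤
        u (condMean f 0 z) * cdfF f z + u (condMean f z 1) * (1 - cdfF f z)) :
    ∃ z ∈ Ioo (0:ℝ) 1,
      (u (condMean f 0 z) + u' (condMean f 0 z) * (z - condMean f 0 z)
        = u (condMean f z 1) + u' (condMean f z 1) * (z - condMean f z 1)) ∧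
      (u (∫ t in (0:ℝ)..1, t * f t) ≤
        u (condMean f 0 z) * cdfF f z + u (condMean f z 1) * (1 - cdfF f z)) ∧
      IsOptimal f u (Ico (0:ℝ) z ∪ Ioc z 1) ∧
      condMean f 0 z ∈ Ioo 0 θL ∧ condMean f z 1 ∈ Ioo θH 1 :=
  split_pooling_optimal_general hf
    (hu.isConcaveConvexConcave hθL.1 hθH.2 hLH hneg1 hpos hneg2) hnopair
    (hM.imp fun _ h => ⟨h.1, h.2.2⟩)
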